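/- arXiv:1902.04739 — 2 statements merged into one kernel-verified Lean document; each statement's English description precedes it below -/
import Mathlib

section
/- Let N ≥ 3, α ∈ (0, N) and 2 ≤ p < (N+α)/(N−2). For every M > 0 there exists C > 0 such that for every radial smooth compactly supported u : ℝ^N → ℂ with ‖u‖_{L²} ≤ M and every R > 1, ∫_{|x| > R} (I_α ∗ |u|^p)(x) |u(x)|^p dx ≤ C ( R^{−(N−1)(p−(N+α)/N)} ‖∇u‖_{L²}^{p−(N+α)/N} + R^{−(N−α+(N−1)(p−2)/2)} ‖∇u‖_{L²}^{(N+1)(p−2)/2} ). -/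
open MeasureTheory Real
open scoped BigOperators

/-- The squared Euclidean norm of the gradient: `∑ i |∂ᵢ u(x)|²`. -/
noncomputable def gradSq {N : ℕ} {F : Type*} [NormedAddCommGroup F] [NormedSpace ℝ F]
    (u : EuclideanSpace ℝ (Fin N) → F) (x : EuclideanSpace ℝ (Fin N)) : ℝ :=
  ∑ i, ‖fderiv ℝ u x (EuclideanSpace.single i 1)‖ ^ 2

/-- The normalization constant `𝒜 = Γ((N−α)/2) / (Γ(α/2) π^{N/2} 2^α)` of
the Riesz potential `I_α(x) = 𝒜 |x|^{α−N}`. -/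
noncomputable def rieszConst (N : ℕ) (α : ℝ) : ℝ :=
  Real.Gamma (((N : ℝ) - α) / 2) /
    (Real.Gamma (α / 2) * Real.pi ^ ((N : ℝ) / 2) * 2 ^ α)

/-- The Riesz convolution `(I_α ∗ |u|^p)(x) = ∫ I_α(x−y) |u(y)|^p dy`. -/
noncomputable def rieszConv (N : ℕ) (α p : ℝ) (u : EuclideanSpace ℝ (Fin N) → ℂ)
    (x : EuclideanSpace ℝ (Fin N)) : ℝ :=
  ∫ y, rieszConst N α * ‖x - y‖ ^ (α - (N : ℝ)) * ‖u y‖ ^ p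

/-- The Choquard nonlocal term `∫ (I_α ∗ |u|^p)(x) |u(x)|^p dx`. -/
noncomputable def choquardTerm (N : ℕ) (α p : ℝ)
    (u : EuclideanSpace ℝ (Fin N) → ℂ) : ℝ :=
  ∫ x, rieszConv N α p u x * ‖u x‖ ^ p

/-- The `H¹` norm `(∫ (|u|² + |∇u|²))^{1/2}`. -/
noncomputable def H1Norm {N : ℕ} (u : EuclideanSpace ℝ (Fin N) → ℂ) : ℝ :=
  Real.sqrt (∫ x, (‖u x‖ ^ 2 + gradSq u x))

/-!
A radial function satisfies Strauss' bound `ω ‖x‖ ^ (d - 1) * ‖u x‖ ^ 2 ≤ 2 ‖u‖₂ ‖∇u‖₂`, where `ω`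
is the area of the unit sphere: integrate the derivative of `‖u‖ ^ 2` along a ray and use polar
coordinates. For `‖x‖ > R`, split the sources of the Riesz potential of `f = ‖u‖ ^ p` at radius
`R / 2`.

* On the exterior sources `‖y‖ > R / 2`, Strauss' bound gives `f ≤ A`, so their potential is at most
  `K * A ^ (1 - α / d) * (∫ f) ^ (α / d)`.
* For the inner sources `‖y‖ ≤ R / 2`, the kernel is at most `(R / 2) ^ (α - d)`, and `∫ f` is
  controlled by the Gagliardo–Nirenberg inequality.

It remains to integrate against `f` over the exterior region, where its mass is again controlled by
Strauss' bound.
-/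

open Metric Module Set
open scoped NNReal

section Lp

variable {X E F : Type*} [MeasurableSpace X] {μ : Measure X}
  [NormedAddCommGroup E] [NormedAddCommGroup F] {u : X → F}

theorem lpNorm_two_eq_sqrt_integral (hu : AEStronglyMeasurable u μ) :
    lpNorm u 2 μ = √(∫ x, ‖u x‖ ^ 2 ∂μ) := by
  simp [lpNorm_eq_integral_norm_rpow_toReal two_ne_zero ENNReal.ofNat_ne_top hu, sqrt_eq_rpow]

theorem integral_norm_sq_eq_lpNorm_sq (hu : AEStronglyMeasurable u μ) :
    ∫ x, ‖u x‖ ^ 2 ∂μ = lpNorm u 2 μ ^ 2 := by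
  rw [lpNorm_two_eq_sqrt_integral hu, sq_sqrt (integral_nonneg fun _ ↦ by positivity)]

theorem integral_norm_mul_norm_le_lpNorm_two {f : X → E} {g : X → F}
    (hf : MemLp f 2 μ) (hg : MemLp g 2 μ) :
    ∫ x, ‖f x‖ * ‖g x‖ ∂μ ≤ lpNorm f 2 μ * lpNorm g 2 μ := by
  rw [← ENNReal.ofReal_ofNat] at hf hg
  simpa [lpNorm_two_eq_sqrt_integral, hf.1, hg.1, sqrt_eq_rpow] using
    integral_mul_norm_le_Lp_mul_Lq HolderConjugate.two_two hf.norm hg.norm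

theorem integral_rpow_mul_rpow_le {f g : X → ℝ} (hf : Integrable f μ) (hg : Integrable g μ)
    (hf0 : 0 ≤ f) (hg0 : 0 ≤ g) {s t : ℝ} (hs : 0 ≤ s) (ht : 0 ≤ t) (hst : s + t = 1) :
    ∫ x, f x ^ s * g x ^ t ∂μ ≤ (∫ x, f x ∂μ) ^ s * (∫ x, g x ∂μ) ^ t := by
  have holder := ENNReal.lintegral_mul_norm_pow_le hf.aemeasurable.ennreal_ofReal
    hg.aemeasurable.ennreal_ofReal hs ht hst
  simp only [ENNReal.ofReal_rpow_of_nonneg (hf0 _) hs, ENNReal.ofReal_rpow_of_nonneg (hg0 _) ht,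
    ← ENNReal.ofReal_mul (rpow_nonneg (hf0 _) s)] at holder
  rw [← ofReal_integral_eq_lintegral_ofReal hf (.of_forall hf0),
    ← ofReal_integral_eq_lintegral_ofReal hg (.of_forall hg0),
    ENNReal.ofReal_rpow_of_nonneg (integral_nonneg hf0) hs,
    ENNReal.ofReal_rpow_of_nonneg (integral_nonneg hg0) ht,
    ← ENNReal.ofReal_mul (rpow_nonneg (integral_nonneg hf0) s)] at holder
  rw [integral_eq_lintegral_of_nonneg_ae
    (.of_forall fun x ↦ mul_nonneg (rpow_nonneg (hf0 x) s) (rpow_nonneg (hg0 x) t))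
    ((hf.aemeasurable.pow_const s).mul (hg.aemeasurable.pow_const t)).aestronglyMeasurable]
  exact ENNReal.toReal_le_of_le_ofReal (mul_nonneg (rpow_nonneg (integral_nonneg hf0) s)
    (rpow_nonneg (integral_nonneg hg0) t)) holder

theorem integrable_norm_rpow_of_hasCompactSupport [TopologicalSpace X] [OpensMeasurableSpace X]
    [IsFiniteMeasureOnCompacts μ] (hu : Continuous u) (hc : HasCompactSupport u)
    {p : ℝ} (hp : 0 < p) : Integrable (fun x ↦ ‖u x‖ ^ p) μ :=
  (hu.norm.rpow_const fun _ ↦ .inr hp.le).integrable_of_hasCompactSupport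
    (hc.norm.rpow_const hp.ne')

theorem integral_norm_rpow_le_rpow_mul_rpow {p q s t : ℝ}
    (hup : Integrable (fun x ↦ ‖u x‖ ^ p) μ) (huq : Integrable (fun x ↦ ‖u x‖ ^ q) μ)
    (hp : 0 ≤ p) (hq : 0 ≤ q) (hs : 0 ≤ s) (ht : 0 ≤ t) (hst : s + t = 1) :
    ∫ x, ‖u x‖ ^ (p * s + q * t) ∂μ ≤ (∫ x, ‖u x‖ ^ p ∂μ) ^ s * (∫ x, ‖u x‖ ^ q ∂μ) ^ t := by
  simpa only [← rpow_mul (norm_nonneg _),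
    ← rpow_add_of_nonneg (norm_nonneg _) (mul_nonneg hp hs) (mul_nonneg hq ht)] using
    integral_rpow_mul_rpow_le hup huq (fun _ ↦ by positivity) (fun _ ↦ by positivity) hs ht hst

theorem setIntegral_norm_rpow_le_rpow_mul_lpNorm_sq {s : Set X} (hs : MeasurableSet s)
    (hu : MemLp u 2 μ) {σ p : ℝ} (hσ : ∀ x ∈ s, ‖u x‖ ^ 2 ≤ σ) (hσ0 : 0 ≤ σ) (hp : 2 ≤ p) :
    ∫ x in s, ‖u x‖ ^ p ∂μ ≤ σ ^ ((p - 2) / 2) * lpNorm u 2 μ ^ 2 := by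
  have hu2 : Integrable (fun x ↦ ‖u x‖ ^ 2) μ := hu.integrable_norm_pow two_ne_zero
  calc ∫ x in s, ‖u x‖ ^ p ∂μ
      ≤ ∫ x in s, σ ^ ((p - 2) / 2) * ‖u x‖ ^ 2 ∂μ := by
        refine integral_mono_of_nonneg (.of_forall fun _ ↦ by positivity)
          (hu2.const_mul _).integrableOn ?_
        filter_upwards [ae_restrict_mem hs] with x hx
        have hp2 : 0 ≤ (p - 2) / 2 := by linarith
        have hsplit : ‖u x‖ ^ p = (‖u x‖ ^ 2) ^ ((p - 2) / 2) * ‖u x‖ ^ 2 := by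
          rw [← rpow_natCast_mul (norm_nonneg _), ← rpow_natCast,
            ← rpow_add_of_nonneg (norm_nonneg _) (by positivity) (by positivity)]
          push_cast
          ring_nf
        grw [hsplit, hσ x hx]
    _ ≤ σ ^ ((p - 2) / 2) * ∫ x, ‖u x‖ ^ 2 ∂μ := by
        rw [integral_const_mul]
        grw [setIntegral_le_integral hu2 (.of_forall fun _ ↦ by positivity)]
    _ = σ ^ ((p - 2) / 2) * lpNorm u 2 μ ^ 2 := by rw [integral_norm_sq_eq_lpNorm_sq hu.1]

end Lp

theorem toSphere_real_univ_pos {E : Type*} [NormedAddCommGroup E] [NormedSpace ℝ E]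
    [FiniteDimensional ℝ E] [Nontrivial E] [MeasurableSpace E] [BorelSpace E] (μ : Measure E)
    [μ.IsAddHaarMeasure] : 0 < μ.toSphere.real univ :=
  have : NeZero μ.toSphere := ⟨μ.toSphere_ne_zero⟩
  measureReal_univ_pos

/-- A function is radial when its value at a point depends only on the norm of the point. -/
def IsRadial {E F : Type*} [Norm E] (u : E → F) : Prop :=
  ∀ x y, ‖x‖ = ‖y‖ → u x = u y

section Radial

variable {E F : Type*} [NormedAddCommGroup E] [NormedSpace ℝ E] [NormedAddCommGroup F]

theorem IsRadial.norm_deriv_smul_le [NormedSpace ℝ F] {u : E → F} (hrad : IsRadial u)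
    {e y : E} (he : ‖e‖ = 1) (hy : y ≠ 0) (hu : DifferentiableAt ℝ u y) :
    ‖deriv (fun t : ℝ ↦ u (t • e)) ‖y‖‖ ≤ ‖fderiv ℝ u y‖ := by
  set w := ‖y‖⁻¹ • y with hw
  have hw1 : ‖w‖ = 1 := norm_smul_inv_norm (𝕜 := ℝ) hy
  have hyw : ‖y‖ • w = y := by rw [hw, smul_inv_smul₀ (norm_ne_zero_iff.mpr hy)]
  have same_profile : (fun t : ℝ ↦ u (t • e)) = fun t : ℝ ↦ u (t • w) :=
    funext fun t ↦ hrad _ _ (by simp only [norm_smul, he, hw1])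
  have ray : HasDerivAt (fun t : ℝ ↦ t • w) w ‖y‖ := by
    simpa using (hasDerivAt_id ‖y‖).smul_const w
  have chain : HasDerivAt (fun t : ℝ ↦ u (t • w)) (fderiv ℝ u y w) ‖y‖ :=
    HasFDerivAt.comp_hasDerivAt ‖y‖ (by rw [hyw]; exact hu.hasFDerivAt) ray
  rw [same_profile, chain.deriv]
  simpa [hw1] using (fderiv ℝ u y).le_opNorm w

variable [InnerProductSpace ℝ F]

theorem pow_mul_norm_sq_le_integral_Ioi {g : ℝ → F} (hg : ContDiff ℝ 1 g)
    (hgc : HasCompactSupport g) (n : ℕ) {r : ℝ} (hr : 0 ≤ r) :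
    r ^ n * ‖g r‖ ^ 2 ≤ 2 * ∫ t in Ioi r, t ^ n * (‖g t‖ * ‖deriv g t‖) := by
  have hsq : ContDiff ℝ 1 fun t ↦ ‖g t‖ ^ 2 := hg.norm_sq ℝ
  have hsqc : HasCompactSupport fun t ↦ ‖g t‖ ^ 2 := hgc.norm.comp_left (g := (· ^ 2)) (by simp)
  have : Continuous (deriv g) := hg.continuous_deriv le_rfl
  have deriv_sq (t : ℝ) : deriv (fun t ↦ ‖g t‖ ^ 2) t = 2 * inner ℝ (g t) (deriv g t) :=
    (hg.differentiable one_ne_zero t).hasDerivAt.norm_sq.deriv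
  have hsq_int : Integrable (deriv fun t ↦ ‖g t‖ ^ 2) :=
    (hsq.continuous_deriv le_rfl).integrable_of_hasCompactSupport hsqc.deriv
  have hint : Integrable fun t ↦ t ^ n * (‖g t‖ * ‖deriv g t‖) :=
    Continuous.integrable_of_hasCompactSupport (by fun_prop) hgc.norm.mul_right.mul_left
  calc r ^ n * ‖g r‖ ^ 2
      = ∫ t in Ioi r, r ^ n * -deriv (fun t ↦ ‖g t‖ ^ 2) t := by
        rw [integral_const_mul, integral_neg, hsqc.integral_Ioi_deriv_eq hsq, neg_neg]
    _ ≤ ∫ t in Ioi r, 2 * (t ^ n * (‖g t‖ * ‖deriv g t‖)) := by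
        refine setIntegral_mono_on (hsq_int.neg.const_mul _).integrableOn
          (hint.const_mul 2).integrableOn measurableSet_Ioi fun t (ht : r < t) ↦ ?_
        have hinner : -deriv (fun t ↦ ‖g t‖ ^ 2) t ≤ 2 * (‖g t‖ * ‖deriv g t‖) := by
          rw [deriv_sq]
          linarith [neg_le_of_abs_le (abs_real_inner_le_norm (g t) (deriv g t))]
        calc r ^ n * -deriv (fun t ↦ ‖g t‖ ^ 2) t
            ≤ r ^ n * (2 * (‖g t‖ * ‖deriv g t‖)) := by gcongr
          _ ≤ t ^ n * (2 * (‖g t‖ * ‖deriv g t‖)) := by gcongr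
          _ = 2 * (t ^ n * (‖g t‖ * ‖deriv g t‖)) := mul_left_comm _ _ _
    _ = 2 * ∫ t in Ioi r, t ^ n * (‖g t‖ * ‖deriv g t‖) := integral_const_mul _ _

variable [FiniteDimensional ℝ E] [MeasurableSpace E] [BorelSpace E]
  {μ : Measure E} [μ.IsAddHaarMeasure]

theorem IsRadial.toSphere_mul_norm_sq_le_integral {u : E → F} (hrad : IsRadial u)
    (hu : ContDiff ℝ 1 u) (hc : HasCompactSupport u) {x : E} (hx : x ≠ 0) :
    μ.toSphere.real univ * (‖x‖ ^ (finrank ℝ E - 1) * ‖u x‖ ^ 2) ≤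
      2 * ∫ y, ‖u y‖ * ‖fderiv ℝ u y‖ ∂μ := by
  have : Nontrivial E := ⟨x, 0, hx⟩
  set e := ‖x‖⁻¹ • x
  have he1 : ‖e‖ = 1 := norm_smul_inv_norm (𝕜 := ℝ) hx
  set g : ℝ → F := fun t ↦ u (t • e)
  have hg : ContDiff ℝ 1 g := hu.comp (contDiff_id.smul contDiff_const)
  have hgc : HasCompactSupport g :=
    hc.comp_isClosedEmbedding (isClosedEmbedding_smul_left (norm_ne_zero_iff.mp (by simp [he1])))
  have g_norm (y : E) : g ‖y‖ = u y := hrad _ _ (by simp [norm_smul, he1])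
  have hint : Integrable fun t ↦ t ^ (finrank ℝ E - 1) * (‖g t‖ * ‖deriv g t‖) :=
    Continuous.integrable_of_hasCompactSupport
      (by have := hg.continuous_deriv le_rfl; fun_prop) hgc.norm.mul_right.mul_left
  calc μ.toSphere.real univ * (‖x‖ ^ (finrank ℝ E - 1) * ‖u x‖ ^ 2)
      ≤ μ.toSphere.real univ *
          (2 * ∫ t in Ioi 0, t ^ (finrank ℝ E - 1) * (‖g t‖ * ‖deriv g t‖)) := by
        rw [← g_norm x]
        grw [pow_mul_norm_sq_le_integral_Ioi hg hgc _ (norm_nonneg x),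
          setIntegral_mono_set hint.integrableOn _ (Ioi_subset_Ioi (norm_nonneg x)).eventuallyLE]
        filter_upwards [ae_restrict_mem measurableSet_Ioi] with t (ht : 0 < t)
        simp only [Pi.zero_apply]
        positivity
    _ = 2 * ∫ y, ‖g ‖y‖‖ * ‖deriv g ‖y‖‖ ∂μ := by
        rw [integral_fun_norm_addHaar μ fun t ↦ ‖g t‖ * ‖deriv g t‖, μ.toSphere_real_apply_univ]
        simp only [smul_eq_mul, nsmul_eq_mul]
        ring
    _ ≤ 2 * ∫ y, ‖u y‖ * ‖fderiv ℝ u y‖ ∂μ := by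
        gcongr 2 * ?_
        refine integral_mono_of_nonneg (.of_forall fun y ↦ by positivity)
          ((hu.continuous.norm.mul (hu.continuous_fderiv one_ne_zero).norm)
            |>.integrable_of_hasCompactSupport hc.norm.mul_right) ?_
        filter_upwards [compl_mem_ae_iff.mpr (measure_singleton (μ := μ) (0 : E))] with y hy
        rw [g_norm y]
        gcongr
        exact hrad.norm_deriv_smul_le he1 hy (hu.differentiable one_ne_zero y)

theorem IsRadial.toSphere_mul_norm_sq_le_lpNorm {u : E → F} (hrad : IsRadial u)
    (hu : ContDiff ℝ 1 u) (hc : HasCompactSupport u) {x : E} (hx : x ≠ 0) :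
    μ.toSphere.real univ * (‖x‖ ^ (finrank ℝ E - 1) * ‖u x‖ ^ 2) ≤
      2 * (lpNorm u 2 μ * lpNorm (fderiv ℝ u) 2 μ) := by
  grw [hrad.toSphere_mul_norm_sq_le_integral hu hc hx, integral_norm_mul_norm_le_lpNorm_two
    (hu.continuous.memLp_of_hasCompactSupport hc)
    ((hu.continuous_fderiv one_ne_zero).memLp_of_hasCompactSupport (hc.fderiv (𝕜 := ℝ)))]

theorem IsRadial.norm_sq_le_of_lt_norm {u : E → F} (hrad : IsRadial u)
    (hu : ContDiff ℝ 1 u) (hc : HasCompactSupport u) {R : ℝ} (hR : 0 < R) {y : E}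
    (hy : R / 2 < ‖y‖) :
    ‖u y‖ ^ 2 ≤ 2 ^ finrank ℝ E / μ.toSphere.real univ *
      (R ^ (-(finrank ℝ E - 1) : ℝ) * (lpNorm u 2 μ * lpNorm (fderiv ℝ u) 2 μ)) := by
  have hy0 : y ≠ 0 := norm_pos_iff.mp ((half_pos hR).trans hy)
  have : Nontrivial E := ⟨y, 0, hy0⟩
  have hω : 0 < μ.toSphere.real univ := toSphere_real_univ_pos μ
  have hpow : R ^ (-(finrank ℝ E - 1) : ℝ) = (R ^ (finrank ℝ E - 1))⁻¹ := by
    rw [rpow_neg hR.le, ← Nat.cast_pred finrank_pos, rpow_natCast]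
  have h2 : (2 : ℝ) ^ finrank ℝ E = 2 * 2 ^ (finrank ℝ E - 1) := by
    rw [← pow_succ', Nat.sub_add_cancel finrank_pos]
  have strauss : μ.toSphere.real univ * ((R / 2) ^ (finrank ℝ E - 1) * ‖u y‖ ^ 2) ≤
      2 * (lpNorm u 2 μ * lpNorm (fderiv ℝ u) 2 μ) :=
    le_trans (by gcongr) (hrad.toSphere_mul_norm_sq_le_lpNorm hu hc hy0)
  rw [hpow, h2]
  rw [div_pow] at strauss
  field_simp at strauss ⊢
  linarith

end Radial

section Sobolev

variable {E F : Type*} [NormedAddCommGroup E] [NormedSpace ℝ E] [FiniteDimensional ℝ E]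
  [MeasurableSpace E] [BorelSpace E] {μ : Measure E} [μ.IsAddHaarMeasure]
  [NormedAddCommGroup F] [NormedSpace ℝ F] [FiniteDimensional ℝ F] {u : E → F}

theorem lpNorm_le_lpNorm_fderiv_of_eq (hu : ContDiff ℝ 1 u) (hc : HasCompactSupport u)
    {p q : ℝ≥0} (hp : 1 ≤ p) (hd : 0 < finrank ℝ E)
    (hq : (q : ℝ)⁻¹ = (p : ℝ)⁻¹ - (finrank ℝ E : ℝ)⁻¹) :
    lpNorm u q μ ≤ SNormLESNormFDerivOfEqConst F μ p * lpNorm (fderiv ℝ u) p μ := by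
  have hdu := hu.continuous_fderiv one_ne_zero
  rw [← toReal_eLpNorm hu.continuous.aestronglyMeasurable,
    ← toReal_eLpNorm hdu.aestronglyMeasurable, ← ENNReal.coe_toReal, ← ENNReal.toReal_mul]
  exact ENNReal.toReal_mono
    (ENNReal.mul_ne_top ENNReal.coe_ne_top
      (hdu.memLp_of_hasCompactSupport (hc.fderiv (𝕜 := ℝ))).eLpNorm_ne_top)
    (eLpNorm_le_eLpNorm_fderiv_of_eq μ hu hc hp hd hq)

theorem integral_norm_rpow_le_sobolev (hu : ContDiff ℝ 1 u) (hc : HasCompactSupport u)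
    (hd : 2 < finrank ℝ E) {q : ℝ} (hq : q = 2 * finrank ℝ E / (finrank ℝ E - 2)) :
    ∫ x, ‖u x‖ ^ q ∂μ ≤
      (SNormLESNormFDerivOfEqConst F μ 2 * lpNorm (fderiv ℝ u) 2 μ) ^ q := by
  have hd' : (2 : ℝ) < finrank ℝ E := by exact_mod_cast hd
  have hd2 : 0 < (finrank ℝ E : ℝ) - 2 := by linarith
  have hq0 : 0 < q := by rw [hq]; positivity
  lift q to ℝ≥0 using hq0.le
  have sobolev := lpNorm_le_lpNorm_fderiv_of_eq (μ := μ) hu hc one_le_two (by lia)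
    (p := 2) (q := q) (by rw [hq]; push_cast; field_simp)
  rw [lpNorm_nnreal_eq_integral_norm_rpow (by exact_mod_cast hq0.ne')
    hu.continuous.aestronglyMeasurable] at sobolev
  exact (rpow_inv_le_iff_of_pos (integral_nonneg fun _ ↦ by positivity)
    (mul_nonneg NNReal.zero_le_coe lpNorm_nonneg) hq0).mp sobolev

theorem integral_norm_rpow_le_gagliardo_nirenberg (hu : ContDiff ℝ 1 u)
    (hc : HasCompactSupport u) (hd : 2 < finrank ℝ E) {p : ℝ} (hp : 2 ≤ p)
    (hp' : p ≤ 2 * finrank ℝ E / (finrank ℝ E - 2)) :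
    ∫ x, ‖u x‖ ^ p ∂μ ≤
      lpNorm u 2 μ ^ (p - finrank ℝ E * (p - 2) / 2) *
        (SNormLESNormFDerivOfEqConst F μ 2 * lpNorm (fderiv ℝ u) 2 μ) ^
          (finrank ℝ E * (p - 2) / 2) := by
  set d : ℝ := (finrank ℝ E : ℝ)
  have hd' : 2 < d := Nat.ofNat_lt_cast.mpr hd
  have hd2 : 0 < d - 2 := by linarith
  set q := 2 * d / (d - 2)
  have hq : 0 < q := by positivity
  set t := (p - 2) * (d - 2) / 4 with ht
  have ht0 : 0 ≤ t := by have := sub_nonneg.mpr hp; positivity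
  have ht1 : t ≤ 1 := by
    rw [le_div_iff₀ hd2] at hp'
    linarith
  have htq : q * t = d * (p - 2) / 2 := by simp only [q, t]; field
  have hsum : 2 * (1 - t) + q * t = p := by rw [htq, ht]; ring
  have hmass : ∫ x, ‖u x‖ ^ (2 : ℝ) ∂μ = lpNorm u 2 μ ^ (2 : ℝ) := by
    simpa only [rpow_two] using
      integral_norm_sq_eq_lpNorm_sq hu.continuous.aestronglyMeasurable
  calc ∫ x, ‖u x‖ ^ p ∂μ
      ≤ (∫ x, ‖u x‖ ^ (2 : ℝ) ∂μ) ^ (1 - t) * (∫ x, ‖u x‖ ^ q ∂μ) ^ t := by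
        rw [← hsum]
        exact integral_norm_rpow_le_rpow_mul_rpow
          (integrable_norm_rpow_of_hasCompactSupport hu.continuous hc two_pos)
          (integrable_norm_rpow_of_hasCompactSupport hu.continuous hc hq)
          zero_le_two hq.le (sub_nonneg.mpr ht1) ht0 (sub_add_cancel 1 t)
    _ ≤ (lpNorm u 2 μ ^ (2 : ℝ)) ^ (1 - t) *
          ((SNormLESNormFDerivOfEqConst F μ 2 * lpNorm (fderiv ℝ u) 2 μ) ^ q) ^ t := by
        rw [hmass]
        gcongr
        · exact rpow_nonneg (rpow_nonneg lpNorm_nonneg _) _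
        · exact integral_norm_rpow_le_sobolev hu hc hd rfl
    _ = _ := by
        rw [← rpow_mul lpNorm_nonneg, ← rpow_mul (mul_nonneg NNReal.zero_le_coe lpNorm_nonneg), htq]
        congr 2
        rw [ht]; ring

end Sobolev

theorem norm_rpow_mul_le_indicator_ball_add {E : Type*} [SeminormedAddCommGroup E]
    {β ρ a A : ℝ} (hβ : β ≤ 0) (hρ : 0 < ρ) (ha : 0 ≤ a) (haA : a ≤ A) (z : E) :
    ‖z‖ ^ β * a ≤ A * (ball 0 ρ).indicator (fun z ↦ ‖z‖ ^ β) z + ρ ^ β * a := by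
  rcases lt_or_ge ‖z‖ ρ with near | far
  · rw [indicator_of_mem (mem_ball_zero_iff.mpr near), mul_comm A]
    grw [← haA, ← mul_nonneg (rpow_nonneg hρ.le _) ha, add_zero]
  · rw [indicator_of_notMem (by simpa using far), mul_zero, zero_add]
    gcongr ?_ * a
    exact rpow_le_rpow_of_nonpos hρ far hβ

section Riesz

variable {E : Type*} [NormedAddCommGroup E] [NormedSpace ℝ E] [MeasurableSpace E]

/-- The Riesz potential `|·|^(α - d) ∗ f` on a space of dimension `d`, without the normalizing
constant. -/
noncomputable def rieszPotential (μ : Measure E) (α : ℝ) (f : E → ℝ) (x : E) : ℝ :=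
  ∫ y, ‖x - y‖ ^ (α - finrank ℝ E) * f y ∂μ

theorem rieszPotential_nonneg {μ : Measure E} {α : ℝ} {f : E → ℝ} (hf : 0 ≤ f) (x : E) :
    0 ≤ rieszPotential μ α f x :=
  integral_nonneg fun y ↦ mul_nonneg (by positivity) (hf y)

variable [FiniteDimensional ℝ E] [BorelSpace E]
  {μ : Measure E} [μ.IsAddHaarMeasure] {α ρ r A : ℝ} {f : E → ℝ} {x : E}

theorem integrableOn_ball_zero_norm_rpow (hα : 0 < α) (hE : 0 < finrank ℝ E) :
    IntegrableOn (fun z : E ↦ ‖z‖ ^ (α - finrank ℝ E)) (ball 0 ρ) μ :=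
  integrableOn_ball_of_norm_le_rpow (C := 1) (α := finrank ℝ E - α) hE (by linarith)
    (.of_forall fun z ↦ by rw [neg_sub, one_mul, norm_of_nonneg (by positivity)])
    (measurable_norm.pow_const _).aestronglyMeasurable

theorem setIntegral_ball_zero_norm_rpow (hα : 0 < α) (hE : 0 < finrank ℝ E) (hρ : 0 ≤ ρ) :
    ∫ z in ball (0 : E) ρ, ‖z‖ ^ (α - finrank ℝ E) ∂μ = μ.toSphere.real univ / α * ρ ^ α := by
  have : Nontrivial E := nontrivial_of_finrank_pos hE
  calc ∫ z in ball (0 : E) ρ, ‖z‖ ^ (α - finrank ℝ E) ∂μ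
      = ∫ z, (Iio ρ).indicator (fun t : ℝ ↦ t ^ (α - finrank ℝ E)) ‖z‖ ∂μ := by
        rw [← integral_indicator measurableSet_ball]
        simp [indicator]
    _ = μ.toSphere.real univ *
          ∫ t in Ioi 0, (Iio ρ).indicator (fun t : ℝ ↦ t ^ (α - 1)) t := by
        rw [integral_fun_norm_addHaar, μ.toSphere_real_apply_univ, nsmul_eq_mul, smul_eq_mul,
          mul_assoc]
        congr! 2
        refine setIntegral_congr_fun measurableSet_Ioi fun t (ht : 0 < t) ↦ ?_
        simp only [indicator, smul_eq_mul, mul_ite, mul_zero]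
        rw [← rpow_natCast, ← rpow_add ht, Nat.cast_pred hE]
        ring_nf
    _ = μ.toSphere.real univ * ∫ t in 0..ρ, t ^ (α - 1) := by
        rw [setIntegral_indicator measurableSet_Iio, Ioi_inter_Iio, ← integral_Ioc_eq_integral_Ioo,
          intervalIntegral.integral_of_le hρ]
    _ = μ.toSphere.real univ / α * ρ ^ α := by
        rw [integral_rpow (.inl (by linarith)), sub_add_cancel, zero_rpow hα.ne']
        ring

theorem integrable_indicator_ball_norm_sub_rpow (hα : 0 < α) (hE : 0 < finrank ℝ E) (x : E) :
    Integrable (fun y ↦ (ball 0 ρ).indicator (fun z ↦ ‖z‖ ^ (α - finrank ℝ E)) (x - y)) μ :=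
  ((integrableOn_ball_zero_norm_rpow hα hE).integrable_indicator measurableSet_ball).comp_sub_left x

theorem integrable_norm_sub_rpow_mul (hα : 0 < α) (hαd : α < finrank ℝ E) (hf : Integrable f μ)
    (hf0 : 0 ≤ f) (hfA : ∀ y, f y ≤ A) (x : E) :
    Integrable (fun y ↦ ‖x - y‖ ^ (α - finrank ℝ E) * f y) μ := by
  have hE : 0 < finrank ℝ E := Nat.cast_pos.mp (hα.trans hαd)
  refine (((integrable_indicator_ball_norm_sub_rpow (ρ := 1) hα hE x).const_mul A).add
    (hf.const_mul (1 ^ (α - finrank ℝ E)))).mono'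
    (((measurable_const_sub x).norm.pow_const _).aestronglyMeasurable.mul hf.1)
    (.of_forall fun y ↦ ?_)
  rw [norm_of_nonneg (mul_nonneg (by positivity) (hf0 y))]
  exact norm_rpow_mul_le_indicator_ball_add (sub_nonpos.mpr hαd.le) one_pos (hf0 y) (hfA y) _

theorem rieszPotential_le_add (hα : 0 < α) (hαd : α < finrank ℝ E) (hf : Integrable f μ)
    (hf0 : 0 ≤ f) (hfA : ∀ y, f y ≤ A) (hρ : 0 < ρ) (x : E) :
    rieszPotential μ α f x ≤
      A * (μ.toSphere.real univ / α * ρ ^ α) + ρ ^ (α - finrank ℝ E) * ∫ y, f y ∂μ := by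
  have hE : 0 < finrank ℝ E := Nat.cast_pos.mp (hα.trans hαd)
  have near_int := (integrable_indicator_ball_norm_sub_rpow (μ := μ) (ρ := ρ) hα hE x).const_mul A
  have far_int := hf.const_mul (ρ ^ (α - finrank ℝ E))
  calc rieszPotential μ α f x
      ≤ ∫ y, A * (ball 0 ρ).indicator (fun z ↦ ‖z‖ ^ (α - finrank ℝ E)) (x - y) +
          ρ ^ (α - finrank ℝ E) * f y ∂μ :=
        integral_mono (integrable_norm_sub_rpow_mul hα hαd hf hf0 hfA x) (near_int.add far_int)
          fun y ↦ norm_rpow_mul_le_indicator_ball_add (sub_nonpos.mpr hαd.le) hρ (hf0 y) (hfA y) _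
    _ = A * (μ.toSphere.real univ / α * ρ ^ α) + ρ ^ (α - finrank ℝ E) * ∫ y, f y ∂μ := by
        rw [integral_add near_int far_int, integral_const_mul, integral_const_mul,
          integral_sub_left_eq_self _ μ x, integral_indicator measurableSet_ball,
          setIntegral_ball_zero_norm_rpow hα hE hρ.le]

theorem rieszPotential_le_rpow_mul_rpow (hα : 0 < α) (hαd : α < finrank ℝ E)
    (hf : Integrable f μ) (hf0 : 0 ≤ f) (hfA : ∀ y, f y ≤ A) (x : E) :
    rieszPotential μ α f x ≤ (μ.toSphere.real univ / α + 1) *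
      (A ^ (1 - α / finrank ℝ E) * (∫ y, f y ∂μ) ^ (α / finrank ℝ E)) := by
  set d : ℝ := (finrank ℝ E : ℝ)
  set B := ∫ y, f y ∂μ
  have hd : 0 < d := hα.trans hαd
  have hA0 : 0 ≤ A := (hf0 0).trans (hfA 0)
  have hB0 : 0 ≤ B := integral_nonneg hf0
  obtain hB | hB := hB0.eq_or_lt
  · have hf_zero : f =ᵐ[μ] 0 := (integral_eq_zero_iff_of_nonneg hf0 hf).mp hB.symm
    have : rieszPotential μ α f x = 0 :=
      integral_eq_zero_of_ae (hf_zero.mono fun y hy ↦ by simp [hy])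
    rw [this]
    positivity
  have hA : 0 < A := hA0.lt_of_ne' fun hA ↦ hB.ne' <|
    integral_eq_zero_of_ae (.of_forall fun y ↦ ((hfA y).trans_eq hA).antisymm (hf0 y))
  -- The radius `(B / A) ^ d⁻¹` balances the two terms of `rieszPotential_le_add`.
  have hρ : 0 < (B / A) ^ d⁻¹ := by positivity
  have hρd : ((B / A) ^ d⁻¹) ^ d = B / A := rpow_inv_rpow (by positivity) hd.ne'
  have near : A * ((B / A) ^ d⁻¹) ^ α = A ^ (1 - α / d) * B ^ (α / d) := by
    rw [← rpow_mul (by positivity), inv_mul_eq_div, div_rpow hB0 hA0, rpow_sub hA, rpow_one]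
    ring
  have far : ((B / A) ^ d⁻¹) ^ (α - d) * B = A ^ (1 - α / d) * B ^ (α / d) := by
    rw [rpow_sub hρ, hρd, ← near]
    field
  refine (rieszPotential_le_add hα hαd hf hf0 hfA hρ x).trans_eq ?_
  rw [far, add_one_mul, ← near]
  ring

theorem rieszPotential_le_of_two_mul_lt_norm (hα : 0 < α) (hαd : α < finrank ℝ E)
    (hf : Integrable f μ) (hf0 : 0 ≤ f) (hr : 0 < r) (hfA : ∀ y, r < ‖y‖ → f y ≤ A)
    (hx : 2 * r < ‖x‖) :
    rieszPotential μ α f x ≤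
      (μ.toSphere.real univ / α + 1) *
          (A ^ (1 - α / finrank ℝ E) * (∫ y in {y | r < ‖y‖}, f y ∂μ) ^ (α / finrank ℝ E)) +
        r ^ (α - finrank ℝ E) * ∫ y, f y ∂μ := by
  set s := {y : E | r < ‖y‖}
  have hs : MeasurableSet s := measurableSet_lt measurable_const measurable_norm
  have hg : Integrable (s.indicator f) μ := hf.indicator hs
  have hg0 : 0 ≤ s.indicator f := indicator_nonneg fun y _ ↦ hf0 y
  have hA : 0 ≤ A := (hf0 x).trans (hfA x (by linarith))
  have hgA (y : E) : s.indicator f y ≤ A := indicator_le' hfA (fun _ _ ↦ hA) y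
  have hkg := integrable_norm_sub_rpow_mul hα hαd hg hg0 hgA x
  have hpt (y : E) : ‖x - y‖ ^ (α - finrank ℝ E) * f y ≤
      ‖x - y‖ ^ (α - finrank ℝ E) * s.indicator f y + r ^ (α - finrank ℝ E) * f y := by
    by_cases hy : y ∈ s
    · rw [indicator_of_mem hy]
      exact le_add_of_nonneg_right (mul_nonneg (by positivity) (hf0 y))
    · have hxy : r ≤ ‖x - y‖ := by
        have : ‖y‖ ≤ r := not_lt.mp hy
        linarith [norm_sub_norm_le x y]
      rw [indicator_of_notMem hy, mul_zero, zero_add]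
      exact mul_le_mul_of_nonneg_right
        (rpow_le_rpow_of_nonpos hr hxy (sub_nonpos.mpr hαd.le)) (hf0 y)
  calc rieszPotential μ α f x
      ≤ ∫ y, ‖x - y‖ ^ (α - finrank ℝ E) * s.indicator f y + r ^ (α - finrank ℝ E) * f y ∂μ :=
        integral_mono_of_nonneg (.of_forall fun y ↦ mul_nonneg (by positivity) (hf0 y))
          (hkg.add (hf.const_mul _)) (.of_forall hpt)
    _ = rieszPotential μ α (s.indicator f) x + r ^ (α - finrank ℝ E) * ∫ y, f y ∂μ := by
        rw [integral_add hkg (hf.const_mul _), integral_const_mul, rieszPotential]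
    _ ≤ _ := by
        grw [rieszPotential_le_rpow_mul_rpow hα hαd hg hg0 hgA x, integral_indicator hs]

theorem setIntegral_rieszPotential_mul_le (hα : 0 < α) (hαd : α < finrank ℝ E)
    (hf : Integrable f μ) (hf0 : 0 ≤ f) (hr : 0 < r) (hfA : ∀ y, r < ‖y‖ → f y ≤ A) :
    ∫ x in {x | 2 * r < ‖x‖}, rieszPotential μ α f x * f x ∂μ ≤
      (μ.toSphere.real univ / α + 1) *
          (A ^ (1 - α / finrank ℝ E) *
            (∫ y in {y | r < ‖y‖}, f y ∂μ) ^ (1 + α / finrank ℝ E)) +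
        r ^ (α - finrank ℝ E) * (∫ y, f y ∂μ) * ∫ y in {y | r < ‖y‖}, f y ∂μ := by
  have hext : 0 ≤ ∫ y in {y | r < ‖y‖}, f y ∂μ := integral_nonneg hf0
  set W := (μ.toSphere.real univ / α + 1) *
      (A ^ (1 - α / finrank ℝ E) * (∫ y in {y | r < ‖y‖}, f y ∂μ) ^ (α / finrank ℝ E)) +
    r ^ (α - finrank ℝ E) * ∫ y, f y ∂μ with hW
  have hpot (x : E) (hx : 2 * r < ‖x‖) : rieszPotential μ α f x ≤ W :=
    rieszPotential_le_of_two_mul_lt_norm hα hαd hf hf0 hr hfA hx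
  calc ∫ x in {x | 2 * r < ‖x‖}, rieszPotential μ α f x * f x ∂μ
      ≤ ∫ x in {x | 2 * r < ‖x‖}, W * f x ∂μ := by
        refine integral_mono_of_nonneg
          (.of_forall fun x ↦ mul_nonneg (rieszPotential_nonneg hf0 x) (hf0 x))
          (hf.const_mul W).integrableOn ?_
        filter_upwards [ae_restrict_mem (measurableSet_lt measurable_const measurable_norm)]
          with x hx
        exact mul_le_mul_of_nonneg_right (hpot x hx) (hf0 x)
    _ ≤ W * ∫ y in {y | r < ‖y‖}, f y ∂μ := by
        have : Nontrivial E := nontrivial_of_finrank_pos (Nat.cast_pos.mp (hα.trans hαd))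
        obtain ⟨x₀, hx₀⟩ := NormedSpace.exists_lt_norm ℝ E (2 * r)
        have hW0 : 0 ≤ W := (rieszPotential_nonneg hf0 x₀).trans (hpot x₀ hx₀)
        have hsub : {x : E | 2 * r < ‖x‖} ⊆ {y | r < ‖y‖} := fun x (hx : 2 * r < ‖x‖) ↦
          show r < ‖x‖ by linarith
        rw [integral_const_mul]
        grw [setIntegral_mono_set hf.integrableOn (.of_forall hf0) hsub.eventuallyLE]
    _ = _ := by
        rw [hW, rpow_add_of_nonneg hext zero_le_one (by positivity), rpow_one]
        ring

end Riesz

section Exterior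

variable {E F : Type*} [NormedAddCommGroup E] [NormedSpace ℝ E] [FiniteDimensional ℝ E]
  [MeasurableSpace E] [BorelSpace E] [NormedAddCommGroup F]
  {μ : Measure E} [μ.IsAddHaarMeasure] {u : E → F} {α p : ℝ}

theorem setIntegral_rieszPotential_norm_rpow_mul_le (hα : 0 < α) (hαd : α < finrank ℝ E)
    (hp : 2 ≤ p) (hu : MemLp u 2 μ) (hup : Integrable (fun x ↦ ‖u x‖ ^ p) μ)
    {r σ : ℝ} (hr : 0 < r) (hσ0 : 0 ≤ σ) (hσ : ∀ y, r < ‖y‖ → ‖u y‖ ^ 2 ≤ σ) :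
    ∫ x in {x | 2 * r < ‖x‖}, rieszPotential μ α (fun y ↦ ‖u y‖ ^ p) x * ‖u x‖ ^ p ∂μ ≤
      (μ.toSphere.real univ / α + 1) * (σ ^ (p - (finrank ℝ E + α) / finrank ℝ E) *
          lpNorm u 2 μ ^ (2 * (1 + α / finrank ℝ E))) +
        r ^ (α - finrank ℝ E) * (∫ y, ‖u y‖ ^ p ∂μ) *
          (σ ^ ((p - 2) / 2) * lpNorm u 2 μ ^ 2) := by
  set d : ℝ := (finrank ℝ E : ℝ)
  have hd : 0 < d := hα.trans hαd
  have hαd1 : 0 ≤ 1 - α / d := by rw [sub_nonneg, div_le_one hd]; exact hαd.le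
  have : 0 ≤ (p - 2) / 2 := by linarith
  have hpow (y : E) (hy : r < ‖y‖) : ‖u y‖ ^ p ≤ σ ^ (p / 2) := by
    grw [← hσ y hy]
    rw [← rpow_natCast_mul (norm_nonneg _), Nat.cast_ofNat, mul_div_cancel₀ _ two_ne_zero]
  have hmass : ∫ y in {y | r < ‖y‖}, ‖u y‖ ^ p ∂μ ≤ σ ^ ((p - 2) / 2) * lpNorm u 2 μ ^ 2 :=
    setIntegral_norm_rpow_le_rpow_mul_lpNorm_sq
      (measurableSet_lt measurable_const measurable_norm) hu hσ hσ0 hp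
  have hexp : (σ ^ (p / 2)) ^ (1 - α / d) * (σ ^ ((p - 2) / 2) * lpNorm u 2 μ ^ 2) ^ (1 + α / d)
      = σ ^ (p - (d + α) / d) * lpNorm u 2 μ ^ (2 * (1 + α / d)) := by
    rw [mul_rpow (by positivity) (by positivity), ← rpow_natCast, ← rpow_mul hσ0, ← rpow_mul hσ0,
      ← rpow_mul lpNorm_nonneg, ← mul_assoc, ← rpow_add_of_nonneg hσ0 (by positivity)
        (by positivity)]
    congr 2
    field
  rw [← hexp]
  grw [setIntegral_rieszPotential_mul_le hα hαd hup (fun _ ↦ by positivity) hr hpow, hmass]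

end Exterior

section RadialExterior

theorem mul_rpow_neg_mul_mul_rpow {c R m G : ℝ} (hc : 0 ≤ c) (hR : 0 ≤ R) (hm : 0 ≤ m)
    (hG : 0 ≤ G) (a k : ℝ) :
    (c * (R ^ (-a) * (m * G))) ^ k = c ^ k * (R ^ (-(a * k)) * (m ^ k * G ^ k)) := by
  rw [mul_rpow hc (by positivity), mul_rpow (by positivity) (by positivity), mul_rpow hm hG,
    ← rpow_mul hR, neg_mul]

theorem exterior_source_scaling {α d p c R m G : ℝ} (hα : 0 < α) (hαd : α ≤ d) (hp : 2 ≤ p)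
    (hc : 0 ≤ c) (hR : 0 ≤ R) (hm : 0 ≤ m) (hG : 0 ≤ G) :
    (c * (R ^ (-(d - 1)) * (m * G))) ^ (p - (d + α) / d) * m ^ (2 * (1 + α / d)) =
      c ^ (p - (d + α) / d) * (m ^ (p + (d + α) / d) *
        (R ^ (-((d - 1) * (p - (d + α) / d))) * G ^ (p - (d + α) / d))) := by
  have hd : 0 < d := hα.trans_le hαd
  have hq : 0 ≤ p - (d + α) / d := by
    rw [sub_nonneg, div_le_iff₀ hd]
    nlinarith
  have hmexp : p + (d + α) / d = p - (d + α) / d + 2 * (1 + α / d) := by field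
  rw [mul_rpow_neg_mul_mul_rpow hc hR hm hG, hmexp, rpow_add_of_nonneg hm hq (by positivity)]
  ring

theorem inner_source_scaling {α d p S c R m G : ℝ} (hd : 0 ≤ d) (hp : 2 ≤ p)
    (hsp : 0 ≤ p - d * (p - 2) / 2) (hS : 0 ≤ S) (hc : 0 ≤ c) (hR : 0 < R) (hm : 0 ≤ m)
    (hG : 0 ≤ G) :
    (R / 2) ^ (α - d) * (m ^ (p - d * (p - 2) / 2) * (S * G) ^ (d * (p - 2) / 2)) *
        ((c * (R ^ (-(d - 1)) * (m * G))) ^ ((p - 2) / 2) * m ^ 2) =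
      2 ^ (d - α) * (S ^ (d * (p - 2) / 2) * c ^ ((p - 2) / 2)) *
        (m ^ (p + 2 - (d - 1) * (p - 2) / 2) *
          (R ^ (-(d - α + (d - 1) * (p - 2) / 2)) * G ^ ((d + 1) * (p - 2) / 2))) := by
  have hk : 0 ≤ (p - 2) / 2 := by linarith
  have hs : 0 ≤ d * (p - 2) / 2 := by rw [mul_div_assoc]; positivity
  have hRexp : -(d - α + (d - 1) * (p - 2) / 2) = (α - d) + -((d - 1) * ((p - 2) / 2)) := by ring
  have hmexp : p + 2 - (d - 1) * (p - 2) / 2 =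
      (p - d * (p - 2) / 2) + (p - 2) / 2 + (2 : ℕ) := by push_cast; ring
  have hGexp : (d + 1) * (p - 2) / 2 = d * (p - 2) / 2 + (p - 2) / 2 := by ring
  rw [mul_rpow_neg_mul_mul_rpow hc hR.le hm hG, hRexp, hmexp, hGexp, rpow_add hR,
    rpow_add_of_nonneg hm (by positivity) (by positivity), rpow_add_of_nonneg hm hsp hk,
    rpow_add_of_nonneg hG hs hk, rpow_natCast, mul_rpow hS hG, div_rpow hR.le zero_le_two,
    ← neg_sub d α, rpow_neg zero_le_two]
  field

variable {E F : Type*} [NormedAddCommGroup E] [NormedSpace ℝ E] [FiniteDimensional ℝ E]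
  [MeasurableSpace E] [BorelSpace E] [NormedAddCommGroup F] [InnerProductSpace ℝ F]

theorem IsRadial.exists_setIntegral_rieszPotential_norm_rpow_mul_le [FiniteDimensional ℝ F]
    (μ : Measure E) [μ.IsAddHaarMeasure] {α p : ℝ} (hd : 2 < finrank ℝ E)
    (hα : 0 < α) (hαd : α < finrank ℝ E) (hp : 2 ≤ p)
    (hp' : p ≤ 2 * finrank ℝ E / (finrank ℝ E - 2)) :
    ∃ C₁ > 0, ∃ C₂ ≥ 0, ∀ u : E → F, IsRadial u → ContDiff ℝ 1 u → HasCompactSupport u → ∀ R > 0,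
      ∫ x in {x | R < ‖x‖}, rieszPotential μ α (fun y ↦ ‖u y‖ ^ p) x * ‖u x‖ ^ p ∂μ ≤
        C₁ * (lpNorm u 2 μ ^ (p + (finrank ℝ E + α) / finrank ℝ E) *
            (R ^ (-((finrank ℝ E - 1) * (p - (finrank ℝ E + α) / finrank ℝ E))) *
              lpNorm (fderiv ℝ u) 2 μ ^ (p - (finrank ℝ E + α) / finrank ℝ E))) +
          C₂ * (lpNorm u 2 μ ^ (p + 2 - (finrank ℝ E - 1) * (p - 2) / 2) *
            (R ^ (-(finrank ℝ E - α + (finrank ℝ E - 1) * (p - 2) / 2)) *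
              lpNorm (fderiv ℝ u) 2 μ ^ ((finrank ℝ E + 1) * (p - 2) / 2))) := by
  set d : ℝ := (finrank ℝ E : ℝ)
  set S : ℝ≥0 := SNormLESNormFDerivOfEqConst F μ 2
  have hd2 : 2 < d := Nat.ofNat_lt_cast.mpr hd
  have hsp : 0 ≤ p - d * (p - 2) / 2 := by
    rw [le_div_iff₀ (by linarith)] at hp'
    linarith
  have : Nontrivial E := nontrivial_of_finrank_pos (zero_lt_two.trans hd)
  have hω : 0 < μ.toSphere.real univ := toSphere_real_univ_pos μ
  set c := 2 ^ finrank ℝ E / μ.toSphere.real univ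
  have hc0 : 0 < c := by positivity
  refine ⟨(μ.toSphere.real univ / α + 1) * c ^ (p - (d + α) / d), by positivity,
    2 ^ (d - α) * (S ^ (d * (p - 2) / 2) * c ^ ((p - 2) / 2)), by positivity,
    fun u hrad hu hc R hR ↦ ?_⟩
  have hm : 0 ≤ lpNorm u 2 μ := lpNorm_nonneg
  have hG : 0 ≤ lpNorm (fderiv ℝ u) 2 μ := lpNorm_nonneg
  have bound := setIntegral_rieszPotential_norm_rpow_mul_le hα hαd hp
    (hu.continuous.memLp_of_hasCompactSupport hc)
    (integrable_norm_rpow_of_hasCompactSupport (μ := μ) hu.continuous hc (by linarith))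
    (half_pos hR) (by positivity) fun y hy ↦ hrad.norm_sq_le_of_lt_norm (μ := μ) hu hc hR hy
  rw [mul_div_cancel₀ _ two_ne_zero] at bound
  rw [mul_assoc (_ + 1), ← exterior_source_scaling hα hαd.le hp hc0.le hR.le hm hG,
    ← inner_source_scaling (by linarith) hp hsp S.coe_nonneg hc0.le hR hm hG]
  grw [bound, integral_norm_rpow_le_gagliardo_nirenberg hu hc hd hp hp']

end RadialExterior

section Gradient

variable {N : ℕ} {F : Type*} [NormedAddCommGroup F] [NormedSpace ℝ F]
  {u : EuclideanSpace ℝ (Fin N) → F}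

theorem gradSq_nonneg (u : EuclideanSpace ℝ (Fin N) → F) (x : EuclideanSpace ℝ (Fin N)) :
    0 ≤ gradSq u x :=
  Finset.sum_nonneg fun _ _ ↦ sq_nonneg _

theorem norm_fderiv_sq_le_gradSq (u : EuclideanSpace ℝ (Fin N) → F)
    (x : EuclideanSpace ℝ (Fin N)) : ‖fderiv ℝ u x‖ ^ 2 ≤ gradSq u x := by
  refine (le_sqrt (norm_nonneg _) (gradSq_nonneg u x)).mp ?_
  refine ContinuousLinearMap.opNorm_le_bound _ (sqrt_nonneg _) fun v ↦ ?_
  calc ‖fderiv ℝ u x v‖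
      = ‖∑ i, v i • fderiv ℝ u x (EuclideanSpace.single i 1)‖ := by
        conv_lhs => rw [← (EuclideanSpace.basisFun (Fin N) ℝ).sum_repr v]
        simp
    _ ≤ ∑ i, ‖fderiv ℝ u x (EuclideanSpace.single i 1)‖ * ‖v i‖ := by
        refine (norm_sum_le _ _).trans_eq ?_
        simp only [norm_smul, mul_comm]
    _ ≤ √(gradSq u x) * ‖v‖ := by
        rw [EuclideanSpace.norm_eq]
        exact sum_mul_le_sqrt_mul_sqrt _ _ _

theorem integrable_gradSq (hu : ContDiff ℝ 1 u) (hc : HasCompactSupport u) :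
    Integrable (gradSq u) := by
  have := hu.continuous_fderiv one_ne_zero
  refine Continuous.integrable_of_hasCompactSupport (by unfold gradSq; fun_prop) ?_
  exact (hc.fderiv (𝕜 := ℝ)).comp_left
    (g := fun L : EuclideanSpace ℝ (Fin N) →L[ℝ] F ↦ ∑ i, ‖L (EuclideanSpace.single i 1)‖ ^ 2)
    (by simp)

theorem lpNorm_fderiv_le_sqrt_integral_gradSq (hu : ContDiff ℝ 1 u) (hc : HasCompactSupport u) :
    lpNorm (fderiv ℝ u) 2 volume ≤ √(∫ x, gradSq u x) := by
  rw [lpNorm_two_eq_sqrt_integral (hu.continuous_fderiv one_ne_zero).aestronglyMeasurable]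
  exact sqrt_le_sqrt (integral_mono_of_nonneg (.of_forall fun _ ↦ sq_nonneg _)
    (integrable_gradSq hu hc) (.of_forall (norm_fderiv_sq_le_gradSq u)))

end Gradient

section Choquard

variable {N : ℕ} {α : ℝ}

theorem rieszConst_pos (hα : 0 < α) (hαN : α < N) : 0 < rieszConst N α :=
  have hden := Gamma_pos_of_pos (half_pos hα)
  div_pos (Gamma_pos_of_pos (half_pos (sub_pos.mpr hαN))) (by positivity)

theorem rieszConv_eq_rieszConst_mul_rieszPotential (p : ℝ) (u : EuclideanSpace ℝ (Fin N) → ℂ)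
    (x : EuclideanSpace ℝ (Fin N)) :
    rieszConv N α p u x =
      rieszConst N α * rieszPotential volume α (fun y ↦ ‖u y‖ ^ p) x := by
  simp only [rieszConv, rieszPotential, finrank_euclideanSpace_fin, mul_assoc, integral_const_mul]

end Choquard

theorem choquard_exterior_estimate_general (N : ℕ) (hN : 3 ≤ N) (α p : ℝ)
    (hα0 : 0 < α) (hαN : α < N) (hp1 : 2 ≤ p) (hp2 : p ≤ 2 * N / (N - 2)) :
    ∀ M > 0, ∃ C > 0, ∀ u : EuclideanSpace ℝ (Fin N) → ℂ,
      ContDiff ℝ 1 u → HasCompactSupport u → IsRadial u → √(∫ x, ‖u x‖ ^ 2) ≤ M → ∀ R > 0,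
      ∫ x in {x | R < ‖x‖}, rieszConv N α p u x * ‖u x‖ ^ p ≤
        C * (R ^ (-((N - 1) * (p - (N + α) / N))) * √(∫ x, gradSq u x) ^ (p - (N + α) / N) +
          R ^ (-(N - α + (N - 1) * (p - 2) / 2)) *
            √(∫ x, gradSq u x) ^ ((N + 1) * (p - 2) / 2)) := by
  intro M hM
  have hN3 : (3 : ℝ) ≤ N := by exact_mod_cast hN
  obtain ⟨C₁, hC₁, C₂, hC₂, bound⟩ :=
    IsRadial.exists_setIntegral_rieszPotential_norm_rpow_mul_le (F := ℂ)
      (volume : Measure (EuclideanSpace ℝ (Fin N))) (α := α) (p := p)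
      (by rw [finrank_euclideanSpace_fin]; exact hN) hα0 (by simpa using hαN) hp1
      (by simpa using hp2)
  simp only [finrank_euclideanSpace_fin] at bound
  have h𝒜 := rieszConst_pos hα0 hαN
  have hq : 0 ≤ p - (N + α) / N := by
    rw [sub_nonneg, div_le_iff₀ (by linarith)]
    nlinarith
  have hb : 0 ≤ p + 2 - (N - 1) * (p - 2) / 2 := by
    rw [le_div_iff₀ (by linarith)] at hp2
    nlinarith
  set a := p + (N + α) / N
  set b := p + 2 - (N - 1) * (p - 2) / 2
  have he : 0 ≤ (N + 1) * (p - 2) / 2 := by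
    have := sub_nonneg.mpr hp1
    positivity
  refine ⟨rieszConst N α * (C₁ * M ^ a + C₂ * M ^ b), by positivity,
    fun u hu hc hrad hm R hR ↦ ?_⟩
  rw [← lpNorm_two_eq_sqrt_integral hu.continuous.aestronglyMeasurable] at hm
  have hu0 : 0 ≤ lpNorm u 2 volume := lpNorm_nonneg
  have hdu0 : 0 ≤ lpNorm (fderiv ℝ u) 2 volume := lpNorm_nonneg
  simp only [rieszConv_eq_rieszConst_mul_rieszPotential, mul_assoc, integral_const_mul]
  grw [bound u hrad hu hc R hR, hm, lpNorm_fderiv_le_sqrt_integral_gradSq hu hc]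
  gcongr
  set X := R ^ (-((N - 1) * (p - (N + α) / N))) * √(∫ x, gradSq u x) ^ (p - (N + α) / N)
  set Y := R ^ (-(N - α + (N - 1) * (p - 2) / 2)) * √(∫ x, gradSq u x) ^ ((N + 1) * (p - 2) / 2)
  have hX : 0 ≤ C₂ * M ^ b * X := by positivity
  have hY : 0 ≤ C₁ * M ^ a * Y := by positivity
  linarith

/-- Exterior estimate on the nonlocal Choquard term for radial functions:
the key ingredient of the localized virial argument for radial blowup. -/
theorem choquard_exterior_estimate (N : ℕ) (hN : 3 ≤ N) (α p : ℝ)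
    (hα0 : 0 < α) (hαN : α < N)
    (hp1 : 2 ≤ p) (hp2 : p < ((N : ℝ) + α) / ((N : ℝ) - 2)) :
    ∀ M > (0 : ℝ), ∃ C > (0 : ℝ), ∀ u : EuclideanSpace ℝ (Fin N) → ℂ,
      ContDiff ℝ (⊤ : ℕ∞) u → HasCompactSupport u →
      (∀ x y : EuclideanSpace ℝ (Fin N), ‖x‖ = ‖y‖ → u x = u y) →
      Real.sqrt (∫ x, ‖u x‖ ^ 2) ≤ M →
      ∀ R > (1 : ℝ),
      (∫ x in {x : EuclideanSpace ℝ (Fin N) | R < ‖x‖},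
          rieszConv N α p u x * ‖u x‖ ^ p) ≤
        C * (R ^ (-(((N : ℝ) - 1) * (p - ((N : ℝ) + α) / N))) *
              Real.sqrt (∫ x, gradSq u x) ^ (p - ((N : ℝ) + α) / N)
            + R ^ (-((N : ℝ) - α + ((N : ℝ) - 1) * (p - 2) / 2)) *
              Real.sqrt (∫ x, gradSq u x) ^ (((N : ℝ) + 1) * (p - 2) / 2)) := by
  intro M hM
  have hN2 : (0 : ℝ) < N - 2 := by rw [sub_pos]; exact_mod_cast hN
  obtain ⟨C, hC, bound⟩ := choquard_exterior_estimate_general N hN α p hα0 hαN hp1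
    (hp2.le.trans (by gcongr; linarith)) M hM
  exact ⟨C, hC, fun u hu hc hrad hm R hR ↦
    bound u (hu.of_le (by simp)) hc hrad hm R (one_pos.trans hR)⟩
end

section
/- Let N ≥ 3, α ∈ (0, N), (N+α)/N < p < (N+α)/(N−2) and b > −(N−2)²/4. Suppose Q : ℝ^N → ℝ is a Schwartz function such that for all x ≠ 0, −ΔQ(x) + b |x|^{−2} Q(x) + Q(x) = (I_α ∗ |Q|^p)(x) |Q(x)|^{p−2} Q(x). Then ∫_{ℝ^N} (I_α ∗ |Q|^p) |Q|^p dx = (2p/(N+α−(N−2)p)) ∫_{ℝ^N} |Q|² dx and ∫_{ℝ^N} ( |∇Q|² + b |Q|²/|x|² ) dx = ((Np−N−α)/(N+α−(N−2)p)) ∫_{ℝ^N} |Q|² dx. -/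
open MeasureTheory Real
open scoped BigOperators

/-- The Laplacian `Δf(x) = ∑ i ∂ᵢᵢ f(x)` of a real-valued function. -/
noncomputable def lapR {N : ℕ} (f : EuclideanSpace ℝ (Fin N) → ℝ)
    (x : EuclideanSpace ℝ (Fin N)) : ℝ :=
  ∑ i, fderiv ℝ (fun y => fderiv ℝ f y (EuclideanSpace.single i 1)) x
    (EuclideanSpace.single i 1)

/-- The Riesz convolution `(I_α ∗ |f|^p)(x)` for a real-valued `f`. -/
noncomputable def rieszConvR (N : ℕ) (α p : ℝ) (f : EuclideanSpace ℝ (Fin N) → ℝ)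
    (x : EuclideanSpace ℝ (Fin N)) : ℝ :=
  ∫ y, rieszConst N α * ‖x - y‖ ^ (α - (N : ℝ)) * |f y| ^ p

/-!
Testing the equation with `Q` gives the Nehari identity and testing it with the Schwartz function
`x · ∇Q` gives the Pohozaev identity; together they form a `2 × 2` linear system for the two
integrals, whose determinant is a multiple of `N + α - (N - 2) p`.

Every term produced by `x · ∇` is evaluated by scaling. If `k` is homogeneous of degree `s` on a
space of dimension `n`, then `∫ k(z) F(tz) dz = t ^ (-(n + s)) ∫ k F`, and differentiating at
`t = 1` yields `∫ k (z · ∇F) = -(n + s) ∫ k F`. The kernel `1` handles the mass and, after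
commuting `x · ∇` with partial derivatives, the Dirichlet energy; `|x|⁻²` handles the potential.
For the nonlocal term the same identity is used on `ℝ^N × ℝ^N`, with the kernel `I_α(x - y)` and
the density `|Q(x)|^p |Q(y)|^p`, so that no derivative ever falls on the Riesz potential.
-/

open Asymptotics
open Module (finrank)
open scoped SchwartzMap LineDeriv

section Decay

variable {V : Type*} [NormedAddCommGroup V]

/-- `f` decays faster than every power of `1 + ‖x‖`. The estimates hold on the whole space, which
the `O`-notation expresses with the filter `⊤`. -/
def RapidDecay (f : V → ℝ) : Prop :=
  ∀ M : ℕ, f =O[⊤] fun x => ((1 + ‖x‖) ^ M)⁻¹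

namespace RapidDecay

variable {f g : V → ℝ}

lemma exists_abs_le (hf : RapidDecay f) (M : ℕ) :
    ∃ C, 0 ≤ C ∧ ∀ x, |f x| ≤ C * ((1 + ‖x‖) ^ M)⁻¹ := by
  obtain ⟨C, hC, hle⟩ := (hf M).exists_nonneg
  refine ⟨C, hC, fun x => (isBigOWith_top.1 hle x).trans_eq ?_⟩
  rw [Real.norm_of_nonneg (by positivity)]

lemma isBigO_one (hf : RapidDecay f) : f =O[⊤] (1 : V → ℝ) :=
  (hf 0).congr_right fun x => by simp

lemma add (hf : RapidDecay f) (hg : RapidDecay g) : RapidDecay fun x => f x + g x :=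
  fun M => (hf M).add (hg M)

lemma mul (hf : RapidDecay f) (hg : RapidDecay g) : RapidDecay fun x => f x * g x :=
  fun M => by simpa using (hf M).mul hg.isBigO_one

lemma const_mul (hf : RapidDecay f) (c : ℝ) : RapidDecay fun x => c * f x :=
  fun M => (hf M).const_mul_left c

lemma abs_rpow (hf : RapidDecay f) {q : ℝ} (hq : 0 < q) : RapidDecay fun x => |f x| ^ q := by
  intro M
  obtain ⟨m, hm⟩ := exists_nat_ge (M / q)
  have hpow : (fun x => |f x| ^ q) =O[⊤] fun x => (((1 + ‖x‖) ^ m)⁻¹) ^ q :=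
    (hf m).abs_left.rpow hq.le (Filter.Eventually.of_forall fun x => by positivity)
  refine hpow.trans (IsBigO.of_norm_le fun x => ?_)
  have hbase : (1 : ℝ) ≤ 1 + ‖x‖ := by linarith [norm_nonneg x]
  rw [Real.norm_of_nonneg (by positivity), Real.inv_rpow (by positivity), ← Real.rpow_natCast,
    ← Real.rpow_mul (by positivity), ← Real.rpow_natCast _ M]
  gcongr
  exact (div_le_iff₀ hq).1 hm

lemma tensor {W : Type*} [NormedAddCommGroup W] {g : W → ℝ} (hf : RapidDecay f)
    (hg : RapidDecay g) : RapidDecay fun z : V × W => f z.1 * g z.2 := by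
  intro M
  have hfst : (fun z : V × W => f z.1) =O[⊤] fun z => ((1 + ‖z.1‖) ^ M)⁻¹ :=
    (hf M).comp_tendsto Filter.tendsto_top
  have hsnd : (fun z : V × W => g z.2) =O[⊤] fun z => ((1 + ‖z.2‖) ^ M)⁻¹ :=
    (hg M).comp_tendsto Filter.tendsto_top
  refine (hfst.mul hsnd).trans (IsBigO.of_norm_le fun z => ?_)
  have hnorm : 1 + ‖z‖ ≤ (1 + ‖z.1‖) * (1 + ‖z.2‖) := by
    have hsup : ‖z‖ ≤ ‖z.1‖ + ‖z.2‖ :=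
      max_le (by linarith [norm_nonneg z.2]) (by linarith [norm_nonneg z.1])
    linarith [mul_nonneg (norm_nonneg z.1) (norm_nonneg z.2)]
  rw [Real.norm_of_nonneg (by positivity), ← mul_inv, ← mul_pow]
  gcongr

end RapidDecay

lemma rapidDecay_schwartzMap [NormedSpace ℝ V] (f : 𝓢(V, ℝ)) : RapidDecay f := by
  intro M
  obtain ⟨C, hC⟩ : ∃ C, ∀ x, (1 + ‖x‖) ^ M * ‖iteratedFDeriv ℝ 0 f x‖ ≤ C :=
    ⟨_, SchwartzMap.one_add_le_sup_seminorm_apply (𝕜 := ℝ) (m := (M, 0)) le_rfl le_rfl f⟩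
  simp only [norm_iteratedFDeriv_zero] at hC
  refine isBigO_top.2 ⟨C, fun x => ?_⟩
  rw [Real.norm_of_nonneg (inv_nonneg.2 (by positivity)), ← div_eq_mul_inv,
    le_div_iff₀ (by positivity), mul_comm]
  exact hC x

end Decay

section TemperedIntegrable

variable {V : Type*} [NormedAddCommGroup V] [MeasurableSpace V] {μ : Measure V} {k F : V → ℝ}

/-- `k` is integrable against some inverse power of `1 + ‖z‖`, hence against every function of
rapid decay: `k` may be locally singular and grow polynomially. -/
def TemperedIntegrable (k : V → ℝ) (μ : Measure V) : Prop :=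
  ∃ M : ℕ, Integrable (fun z => k z * ((1 + ‖z‖) ^ M)⁻¹) μ

lemma temperedIntegrable_one [μ.HasTemperateGrowth] : TemperedIntegrable (fun _ => 1) μ :=
  ⟨μ.integrablePower, by
    simpa [Real.rpow_neg, add_nonneg] using μ.integrable_pow_neg_integrablePower⟩

namespace TemperedIntegrable

lemma const_mul (hk : TemperedIntegrable k μ) (c : ℝ) :
    TemperedIntegrable (fun z => c * k z) μ := by
  obtain ⟨M, hM⟩ := hk
  exact ⟨M, by simpa only [mul_assoc] using hM.const_mul c⟩

variable [BorelSpace V]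

lemma aestronglyMeasurable (hk : TemperedIntegrable k μ) : AEStronglyMeasurable k μ := by
  obtain ⟨M, hM⟩ := hk
  have hcont : Continuous fun z : V => (1 + ‖z‖) ^ M := by fun_prop
  refine (hM.aestronglyMeasurable.mul hcont.aestronglyMeasurable).congr
    (Filter.Eventually.of_forall fun z => ?_)
  have hpos : (1 + ‖z‖) ^ M ≠ 0 := by positivity
  simp only [Pi.mul_apply, mul_assoc, inv_mul_cancel₀ hpos, mul_one]

lemma integrable_mul (hk : TemperedIntegrable k μ) (hF : AEStronglyMeasurable F μ)
    (hdecay : RapidDecay F) : Integrable (fun z => k z * F z) μ := by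
  have hkF : AEStronglyMeasurable (fun z => k z * F z) μ := hk.aestronglyMeasurable.mul hF
  obtain ⟨M, hM⟩ := hk
  obtain ⟨C, -, hC⟩ := hdecay.exists_abs_le M
  refine (hM.norm.const_mul C).mono' hkF (Filter.Eventually.of_forall fun z => ?_)
  have hw : 0 ≤ ((1 + ‖z‖) ^ M)⁻¹ := by positivity
  calc ‖k z * F z‖ = ‖k z‖ * |F z| := norm_mul _ _
    _ ≤ ‖k z‖ * (C * ((1 + ‖z‖) ^ M)⁻¹) := by gcongr; exact hC z
    _ = C * ‖k z * ((1 + ‖z‖) ^ M)⁻¹‖ := by rw [norm_mul, Real.norm_of_nonneg hw]; ring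

lemma comp_sub [NormedSpace ℝ V] [FiniteDimensional ℝ V] [μ.IsAddHaarMeasure]
    (hk : TemperedIntegrable k μ) :
    TemperedIntegrable (fun z : V × V => k (z.1 - z.2)) (μ.prod μ) := by
  obtain ⟨m, hm⟩ := temperedIntegrable_one (μ := μ)
  obtain ⟨M, hM⟩ := hk
  have hconv := hm.convolution_integrand (ContinuousLinearMap.mul ℝ ℝ) hM
  -- the weight of order `m + M` in `z`, relative to the weights of the convolution integrand
  let w : V × V → ℝ := fun z =>
    (1 + ‖z.2‖) ^ m * (1 + ‖z.1 - z.2‖) ^ M * ((1 + ‖z‖) ^ (m + M))⁻¹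
  have hw : Continuous w := by
    refine Continuous.mul (by fun_prop) (Continuous.inv₀ (by fun_prop) fun z => by positivity)
  have hw_le (z : V × V) : ‖w z‖ ≤ 2 ^ M := by
    have hsnd : 1 + ‖z.2‖ ≤ 1 + ‖z‖ := by gcongr; exact norm_snd_le z
    have hsub : 1 + ‖z.1 - z.2‖ ≤ 2 * (1 + ‖z‖) := by
      linarith [norm_sub_le z.1 z.2, norm_fst_le z, norm_snd_le z]
    rw [Real.norm_of_nonneg (by positivity)]
    refine (div_le_iff₀ (by positivity)).2 ?_
    calc (1 + ‖z.2‖) ^ m * (1 + ‖z.1 - z.2‖) ^ M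
        ≤ (1 + ‖z‖) ^ m * (2 * (1 + ‖z‖)) ^ M := by gcongr
      _ = 2 ^ M * (1 + ‖z‖) ^ (m + M) := by rw [mul_pow]; ring
  refine ⟨m + M, (hconv.mul_bdd hw.aestronglyMeasurable
    (Filter.Eventually.of_forall hw_le)).congr (Filter.Eventually.of_forall fun z => ?_)⟩
  simp only [ContinuousLinearMap.mul_apply', w]
  field_simp

end TemperedIntegrable

lemma temperedIntegrable_norm_rpow [NormedSpace ℝ V] [FiniteDimensional ℝ V] [BorelSpace V]
    [μ.IsAddHaarMeasure] {s : ℝ} (hs : -(finrank ℝ V : ℝ) < s) :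
    TemperedIntegrable (fun z => ‖z‖ ^ s) μ := by
  rcases subsingleton_or_nontrivial V with hV | hV
  · exact ⟨0, by simp [Subsingleton.elim _ (0 : V)]⟩
  obtain ⟨m, hm⟩ := exists_nat_ge s
  obtain ⟨M, hM⟩ := temperedIntegrable_one (μ := μ)
  have hmeas (K : ℕ) : AEStronglyMeasurable (fun z : V => ‖z‖ ^ s * ((1 + ‖z‖) ^ K)⁻¹) μ :=
    Measurable.aestronglyMeasurable (by fun_prop)
  have hball : IntegrableOn (fun z : V => ‖z‖ ^ s * ((1 + ‖z‖) ^ (m + M))⁻¹)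
      (Metric.ball 0 1) μ := by
    refine integrableOn_ball_of_norm_le_rpow (C := 1) (α := -s) Module.finrank_pos (by linarith)
      (Filter.Eventually.of_forall fun z => ?_) (hmeas _)
    rw [Real.norm_of_nonneg (by positivity), neg_neg, one_mul]
    exact mul_le_of_le_one_right (by positivity)
      (inv_le_one_of_one_le₀ (one_le_pow₀ (by linarith [norm_nonneg z])))
  have hcompl : IntegrableOn (fun z : V => ‖z‖ ^ s * ((1 + ‖z‖) ^ (m + M))⁻¹)
      (Metric.ball 0 1)ᶜ μ := by
    refine hM.integrableOn.mono' (hmeas _).restrict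
      (ae_restrict_of_forall_mem Metric.isOpen_ball.measurableSet.compl fun z hz => ?_)
    have hz : 1 ≤ ‖z‖ := by simpa using hz
    have hgrowth : ‖z‖ ^ s ≤ (1 + ‖z‖) ^ m := calc
      ‖z‖ ^ s ≤ ‖z‖ ^ (m : ℝ) := Real.rpow_le_rpow_of_exponent_le hz hm
      _ = ‖z‖ ^ m := Real.rpow_natCast _ _
      _ ≤ (1 + ‖z‖) ^ m := by gcongr; linarith
    rw [Real.norm_of_nonneg (by positivity), one_mul, pow_add, mul_inv, ← mul_assoc]
    refine mul_le_of_le_one_left (by positivity) ?_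
    rw [← div_eq_mul_inv]
    exact div_le_one_of_le₀ hgrowth (by positivity)
  exact ⟨m + M, (integrableOn_univ.1 (Set.union_compl_self (Metric.ball (0 : V) 1) ▸
    hball.union hcompl))⟩

end TemperedIntegrable

lemma abs_abs_rpow_sub_two_mul {p : ℝ} (hp : 1 < p) (y : ℝ) :
    |(|y| ^ (p - 2) * y)| = |y| ^ (p - 1) := by
  have hexp : p - 2 + 1 ≠ 0 := by linarith
  rw [abs_mul, abs_of_nonneg (by positivity), ← Real.rpow_add_one' (abs_nonneg y) hexp]
  ring_nf

lemma abs_rpow_sub_two_mul_mul_self {p : ℝ} (hp : p ≠ 0) (y : ℝ) :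
    |y| ^ (p - 2) * y * y = |y| ^ p := by
  have hexp : p - 2 + (2 : ℕ) ≠ 0 := by push_cast; simpa using hp
  have h := Real.rpow_add_natCast' (abs_nonneg y) hexp
  rw [sq_abs, Nat.cast_ofNat, sub_add_cancel] at h
  rw [h]
  ring

section EulerField

variable {V : Type*} [NormedAddCommGroup V] [NormedSpace ℝ V] {f g : V → ℝ}

/-- The derivative `x · ∇f` along the Euler vector field, the generator of dilations. -/
noncomputable def eulerDeriv (f : V → ℝ) (x : V) : ℝ :=
  fderiv ℝ f x x

lemma eulerDeriv_mul {x : V} (hf : DifferentiableAt ℝ f x) (hg : DifferentiableAt ℝ g x) :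
    eulerDeriv (fun y => f y * g y) x = f x * eulerDeriv g x + g x * eulerDeriv f x := by
  simp only [eulerDeriv, fderiv_fun_mul hf hg, add_apply, smul_apply, smul_eq_mul]

lemma eulerDeriv_tensor {W : Type*} [NormedAddCommGroup W] [NormedSpace ℝ W] {g : W → ℝ}
    {z : V × W} (hf : DifferentiableAt ℝ f z.1) (hg : DifferentiableAt ℝ g z.2) :
    eulerDeriv (fun z : V × W => f z.1 * g z.2) z =
      f z.1 * eulerDeriv g z.2 + eulerDeriv f z.1 * g z.2 := by
  rw [mul_comm (eulerDeriv f z.1)]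
  have hfst := hf.hasFDerivAt.comp z hasFDerivAt_fst
  have hsnd := hg.hasFDerivAt.comp z hasFDerivAt_snd
  exact DFunLike.congr_fun (hfst.mul hsnd).fderiv z

lemma eulerDeriv_abs_rpow {p : ℝ} (hp : 1 < p) {x : V} (hf : DifferentiableAt ℝ f x) :
    eulerDeriv (fun y => |f y| ^ p) x = p * (|f x| ^ (p - 2) * f x * eulerDeriv f x) := by
  have hderiv : HasFDerivAt (fun y => |f y| ^ p)
      ((p * |f x| ^ (p - 2) * f x) • fderiv ℝ f x) x :=
    (hasDerivAt_abs_rpow (f x) hp).comp_hasFDerivAt x hf.hasFDerivAt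
  rw [eulerDeriv, hderiv.fderiv, smul_apply, smul_eq_mul, eulerDeriv]
  ring

lemma continuous_eulerDeriv (hf : ContDiff ℝ 1 f) : Continuous (eulerDeriv f) :=
  (hf.continuous_fderiv one_ne_zero).clm_apply continuous_id

/-- A `C¹` function decaying rapidly together with its Euler derivative; unlike Schwartz functions,
this class is stable under `f ↦ |f| ^ p` for `1 < p`. -/
structure EulerRegular (f : V → ℝ) : Prop where
  contDiff : ContDiff ℝ 1 f
  rapidDecay : RapidDecay f
  rapidDecay_eulerDeriv : RapidDecay (eulerDeriv f)

namespace EulerRegular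

lemma differentiable (hf : EulerRegular f) : Differentiable ℝ f :=
  hf.contDiff.differentiable one_ne_zero

lemma mul (hf : EulerRegular f) (hg : EulerRegular g) : EulerRegular fun x => f x * g x where
  contDiff := hf.contDiff.mul hg.contDiff
  rapidDecay := hf.rapidDecay.mul hg.rapidDecay
  rapidDecay_eulerDeriv := by
    have hderiv : eulerDeriv (fun x => f x * g x) =
        fun x => f x * eulerDeriv g x + g x * eulerDeriv f x :=
      funext fun x => eulerDeriv_mul (hf.differentiable x) (hg.differentiable x)
    rw [hderiv]
    exact (hf.rapidDecay.mul hg.rapidDecay_eulerDeriv).add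
      (hg.rapidDecay.mul hf.rapidDecay_eulerDeriv)

lemma tensor {W : Type*} [NormedAddCommGroup W] [NormedSpace ℝ W] {g : W → ℝ}
    (hf : EulerRegular f) (hg : EulerRegular g) :
    EulerRegular fun z : V × W => f z.1 * g z.2 where
  contDiff := (hf.contDiff.comp contDiff_fst).mul (hg.contDiff.comp contDiff_snd)
  rapidDecay := hf.rapidDecay.tensor hg.rapidDecay
  rapidDecay_eulerDeriv := by
    have hderiv : eulerDeriv (fun z : V × W => f z.1 * g z.2) =
        fun z => f z.1 * eulerDeriv g z.2 + eulerDeriv f z.1 * g z.2 :=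
      funext fun z => eulerDeriv_tensor (hf.differentiable z.1) (hg.differentiable z.2)
    rw [hderiv]
    exact (hf.rapidDecay.tensor hg.rapidDecay_eulerDeriv).add
      (hf.rapidDecay_eulerDeriv.tensor hg.rapidDecay)

lemma abs_rpow (hf : EulerRegular f) {p : ℝ} (hp : 1 < p) :
    EulerRegular fun x => |f x| ^ p where
  contDiff := hf.contDiff.norm_rpow hp
  rapidDecay := hf.rapidDecay.abs_rpow (by linarith)
  rapidDecay_eulerDeriv := by
    have hderiv : eulerDeriv (fun x => |f x| ^ p) =
        fun x => p * (|f x| ^ (p - 2) * f x * eulerDeriv f x) :=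
      funext fun x => eulerDeriv_abs_rpow hp (hf.differentiable x)
    have hfactor : RapidDecay fun x => |f x| ^ (p - 2) * f x := fun M =>
      ((hf.rapidDecay.abs_rpow (sub_pos.2 hp) M).congr_left fun x =>
        (abs_abs_rpow_sub_two_mul hp (f x)).symm).of_abs_left
    rw [hderiv]
    exact (hfactor.mul hf.rapidDecay_eulerDeriv).const_mul p

end EulerRegular

lemma exists_abs_fderiv_smul_le (hf : RapidDecay (eulerDeriv f)) (M : ℕ) :
    ∃ C, ∀ t : ℝ, 1 / 2 < t → ∀ z : V, |fderiv ℝ f (t • z) z| ≤ C * ((1 + ‖z‖) ^ M)⁻¹ := by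
  obtain ⟨C, hC, hbound⟩ := hf.exists_abs_le M
  refine ⟨2 * (C * 2 ^ M), fun t ht z => ?_⟩
  have ht0 : 0 < t := by linarith
  have hpull : fderiv ℝ f (t • z) z = t⁻¹ * eulerDeriv f (t • z) := by
    rw [eulerDeriv, map_smul, smul_eq_mul, inv_mul_cancel_left₀ ht0.ne']
  have hinv : t⁻¹ ≤ 2 := by
    rw [inv_le_comm₀ ht0 two_pos]
    linarith
  have hnorm : (1 + ‖z‖) / 2 ≤ 1 + ‖t • z‖ := by
    rw [norm_smul, Real.norm_of_nonneg ht0.le]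
    linarith [mul_le_mul_of_nonneg_right ht.le (norm_nonneg z)]
  calc |fderiv ℝ f (t • z) z| = t⁻¹ * |eulerDeriv f (t • z)| := by
        rw [hpull, abs_mul, abs_of_pos (inv_pos.2 ht0)]
    _ ≤ 2 * (C * ((1 + ‖t • z‖) ^ M)⁻¹) := by gcongr; exact hbound _
    _ ≤ 2 * (C * (((1 + ‖z‖) / 2) ^ M)⁻¹) := by gcongr
    _ = 2 * (C * 2 ^ M) * ((1 + ‖z‖) ^ M)⁻¹ := by rw [div_pow, inv_div]; ring

end EulerField

section Homogeneous

variable {V : Type*} [NormedAddCommGroup V] [NormedSpace ℝ V] {k : V → ℝ} {s : ℝ}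

/-- `k` is positively homogeneous of real degree `s`. -/
def PosHomogeneous (k : V → ℝ) (s : ℝ) : Prop :=
  ∀ t : ℝ, 0 < t → ∀ z, k (t • z) = t ^ s * k z

lemma posHomogeneous_one : PosHomogeneous (fun _ : V => 1) 0 := fun t _ _ => by
  rw [Real.rpow_zero, one_mul]

lemma posHomogeneous_norm_rpow (s : ℝ) : PosHomogeneous (fun z : V => ‖z‖ ^ s) s :=
  fun t ht z => by
    simp only [norm_smul, Real.norm_of_nonneg ht.le, Real.mul_rpow ht.le (norm_nonneg z)]

namespace PosHomogeneous

lemma const_mul (hk : PosHomogeneous k s) (c : ℝ) : PosHomogeneous (fun z => c * k z) s :=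
  fun t ht z => by simp only [hk t ht, mul_left_comm]

lemma comp_sub (hk : PosHomogeneous k s) :
    PosHomogeneous (fun z : V × V => k (z.1 - z.2)) s :=
  fun t ht z => by
    simp only [Prod.smul_fst, Prod.smul_snd, ← smul_sub, hk t ht]

end PosHomogeneous

end Homogeneous

section EulerIdentity

variable {V : Type*} [NormedAddCommGroup V] [NormedSpace ℝ V] [MeasurableSpace V] [BorelSpace V]
  {μ : Measure V} {k F : V → ℝ} {s : ℝ}

lemma hasDerivAt_integral_mul_comp_smul (hk : TemperedIntegrable k μ) (hF : EulerRegular F) :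
    HasDerivAt (fun t : ℝ => ∫ z, k z * F (t • z) ∂μ) (∫ z, k z * eulerDeriv F z ∂μ) 1 := by
  have hk_meas := hk.aestronglyMeasurable
  have hkF := hk.integrable_mul hF.contDiff.continuous.aestronglyMeasurable hF.rapidDecay
  obtain ⟨M, hM⟩ := hk
  obtain ⟨C, hC⟩ := exists_abs_fderiv_smul_le hF.rapidDecay_eulerDeriv M
  have hderiv (z : V) (t : ℝ) :
      HasDerivAt (fun t : ℝ => k z * F (t • z)) (k z * fderiv ℝ F (t • z) z) t := by
    have hray : HasDerivAt (fun t : ℝ => t • z) z t := by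
      simpa only [id_eq, one_smul] using (hasDerivAt_id t).smul_const z
    exact ((hF.differentiable (t • z)).hasFDerivAt.comp_hasDerivAt t hray).const_mul _
  have hbound (z : V) (t : ℝ) (ht : t ∈ Set.Ioi (1 / 2)) :
      ‖k z * fderiv ℝ F (t • z) z‖ ≤ C * ‖k z * ((1 + ‖z‖) ^ M)⁻¹‖ := by
    have hw : 0 ≤ ((1 + ‖z‖) ^ M)⁻¹ := by positivity
    rw [norm_mul, norm_mul, Real.norm_of_nonneg hw, mul_left_comm]
    exact mul_le_mul_of_nonneg_left (hC t ht z) (norm_nonneg _)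
  have hmain := (hasDerivAt_integral_of_dominated_loc_of_deriv_le (μ := μ) (𝕜 := ℝ)
    (F := fun t z => k z * F (t • z)) (F' := fun t z => k z * fderiv ℝ F (t • z) z) (x₀ := 1)
    (Ioi_mem_nhds one_half_lt_one)
    (Filter.Eventually.of_forall fun t => hk_meas.mul
      (hF.contDiff.continuous.comp (continuous_const_smul t)).aestronglyMeasurable)
    (by simpa only [one_smul] using hkF)
    (by simpa only [one_smul, eulerDeriv] using
      hk_meas.fun_mul (continuous_eulerDeriv hF.contDiff).aestronglyMeasurable)
    (Filter.Eventually.of_forall hbound) (hM.norm.const_mul C)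
    (Filter.Eventually.of_forall fun z t _ => hderiv z t)).2
  simpa only [one_smul, eulerDeriv] using hmain

variable [FiniteDimensional ℝ V] [μ.IsAddHaarMeasure]

lemma integral_posHomogeneous_mul_comp_smul (hk : PosHomogeneous k s) (F : V → ℝ) {t : ℝ}
    (ht : 0 < t) :
    ∫ z, k z * F (t • z) ∂μ = t ^ (-(finrank ℝ V + s)) * ∫ z, k z * F z ∂μ := by
  have hscale : t ^ s * ∫ z, k z * F (t • z) ∂μ =
      (t ^ finrank ℝ V)⁻¹ * ∫ z, k z * F z ∂μ := by
    have h := μ.integral_comp_smul_of_nonneg (fun z => k z * F z) t (hR := ht.le)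
    simpa only [hk t ht, mul_assoc, integral_const_mul, smul_eq_mul] using h
  have hts : t ^ s ≠ 0 := (Real.rpow_pos_of_pos ht s).ne'
  rw [Real.rpow_neg ht.le, Real.rpow_add ht, Real.rpow_natCast, mul_inv, mul_right_comm, ← hscale,
    mul_right_comm, mul_inv_cancel₀ hts, one_mul]

theorem integral_posHomogeneous_mul_eulerDeriv (hk : PosHomogeneous k s)
    (hkμ : TemperedIntegrable k μ) (hF : EulerRegular F) :
    ∫ z, k z * eulerDeriv F z ∂μ = -(finrank ℝ V + s) * ∫ z, k z * F z ∂μ := by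
  have hpow : HasDerivAt
      (fun t : ℝ => t ^ (-(finrank ℝ V + s)) * ∫ z, k z * F z ∂μ)
      (-(finrank ℝ V + s) * ∫ z, k z * F z ∂μ) 1 := by
    simpa only [Real.one_rpow, mul_one] using
      (Real.hasDerivAt_rpow_const (Or.inl one_ne_zero)).mul_const (∫ z, k z * F z ∂μ)
  have hscale : (fun t : ℝ => ∫ z, k z * F (t • z) ∂μ) =ᶠ[nhds 1]
      fun t => t ^ (-(finrank ℝ V + s)) * ∫ z, k z * F z ∂μ := by
    filter_upwards [Ioi_mem_nhds one_pos] with t ht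
    exact integral_posHomogeneous_mul_comp_smul hk F ht
  exact (hasDerivAt_integral_mul_comp_smul hkμ hF).unique (hpow.congr_of_eventuallyEq hscale)

lemma integral_posHomogeneous_mul_mul_eulerDeriv_self (hk : PosHomogeneous k s)
    (hkμ : TemperedIntegrable k μ) (hF : EulerRegular F) :
    ∫ z, k z * (eulerDeriv F z * F z) ∂μ =
      -((finrank ℝ V + s) / 2) * ∫ z, k z * F z ^ 2 ∂μ := by
  have hsq := integral_posHomogeneous_mul_eulerDeriv hk hkμ (hF.mul hF)
  have hderiv (z : V) : k z * eulerDeriv (fun y => F y * F y) z =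
      2 * (k z * (eulerDeriv F z * F z)) := by
    rw [eulerDeriv_mul (hF.differentiable z) (hF.differentiable z)]
    ring
  simp only [hderiv, integral_const_mul] at hsq
  simp only [pow_two]
  linarith

end EulerIdentity

section Convolution

variable {V : Type*} [NormedAddCommGroup V] [NormedSpace ℝ V] [FiniteDimensional ℝ V]
  [MeasurableSpace V] [BorelSpace V] {μ : Measure V} [μ.IsAddHaarMeasure] {k f u : V → ℝ} {s : ℝ}

lemma TemperedIntegrable.integrable_comp_sub_mul_tensor (hk : TemperedIntegrable k μ)
    (hf : Continuous f) (hf_decay : RapidDecay f) (hu : Continuous u) (hu_decay : RapidDecay u) :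
    Integrable (fun z : V × V => k (z.1 - z.2) * (u z.1 * f z.2)) (μ.prod μ) :=
  hk.comp_sub.integrable_mul (Continuous.aestronglyMeasurable (by fun_prop))
    (hu_decay.tensor hf_decay)

lemma integral_convolution_mul (hk : TemperedIntegrable k μ) (hf : Continuous f)
    (hf_decay : RapidDecay f) (hu : Continuous u) (hu_decay : RapidDecay u) :
    ∫ x, (∫ y, k (x - y) * f y ∂μ) * u x ∂μ =
      ∫ z, k (z.1 - z.2) * (u z.1 * f z.2) ∂μ.prod μ := by
  rw [integral_prod _ (hk.integrable_comp_sub_mul_tensor hf hf_decay hu hu_decay)]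
  congr 1 with x
  rw [← integral_mul_const]
  congr 1 with y
  ring

/-- The Euler identity for the kernel `k (x - y)` and the density `f x * f y` on `V × V`. -/
theorem integral_convolution_mul_eulerDeriv (hk : PosHomogeneous k s)
    (hkμ : TemperedIntegrable k μ) (hk_even : ∀ z, k (-z) = k z) (hf : EulerRegular f) :
    ∫ x, (∫ y, k (x - y) * f y ∂μ) * eulerDeriv f x ∂μ =
      -(finrank ℝ V + s / 2) * ∫ x, (∫ y, k (x - y) * f y ∂μ) * f x ∂μ := by
  have hf_cont := hf.contDiff.continuous
  have hf'_cont := continuous_eulerDeriv hf.contDiff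
  rw [integral_convolution_mul hkμ hf_cont hf.rapidDecay hf'_cont hf.rapidDecay_eulerDeriv,
    integral_convolution_mul hkμ hf_cont hf.rapidDecay hf_cont hf.rapidDecay]
  have heuler := integral_posHomogeneous_mul_eulerDeriv hk.comp_sub hkμ.comp_sub (hf.tensor hf)
  have hleft := hkμ.integrable_comp_sub_mul_tensor hf_cont hf.rapidDecay
    hf'_cont hf.rapidDecay_eulerDeriv
  have hright := hkμ.integrable_comp_sub_mul_tensor hf'_cont hf.rapidDecay_eulerDeriv
    hf_cont hf.rapidDecay
  have hsymm : ∫ z : V × V, k (z.1 - z.2) * (f z.1 * eulerDeriv f z.2) ∂μ.prod μ =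
      ∫ z : V × V, k (z.1 - z.2) * (eulerDeriv f z.1 * f z.2) ∂μ.prod μ := by
    rw [← integral_prod_swap]
    congr 1 with z
    rw [Prod.fst_swap, Prod.snd_swap, ← neg_sub z.1 z.2, hk_even, mul_comm (f z.2)]
  have hsplit (z : V × V) : k (z.1 - z.2) * eulerDeriv (fun z : V × V => f z.1 * f z.2) z =
      k (z.1 - z.2) * (f z.1 * eulerDeriv f z.2) +
        k (z.1 - z.2) * (eulerDeriv f z.1 * f z.2) := by
    rw [eulerDeriv_tensor (hf.differentiable z.1) (hf.differentiable z.2)]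
    ring
  simp only [hsplit] at heuler
  rw [integral_add hright hleft, hsymm, Module.finrank_prod] at heuler
  push_cast at heuler
  linarith

end Convolution

section Schwartz

variable {V : Type*} [NormedAddCommGroup V] [NormedSpace ℝ V]

/-- The Euler derivative as an operation on Schwartz functions. -/
noncomputable def schwartzEulerDeriv (Q : 𝓢(V, ℝ)) : 𝓢(V, ℝ) :=
  SchwartzMap.bilinLeftCLM (ContinuousLinearMap.id ℝ (V →L[ℝ] ℝ)) Function.HasTemperateGrowth.id
    (SchwartzMap.fderivCLM ℝ V ℝ Q)

@[simp]
lemma schwartzEulerDeriv_apply (Q : 𝓢(V, ℝ)) (x : V) :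
    schwartzEulerDeriv Q x = eulerDeriv Q x := rfl

lemma eulerRegular_schwartzMap (Q : 𝓢(V, ℝ)) : EulerRegular Q where
  contDiff := Q.smooth 1
  rapidDecay := rapidDecay_schwartzMap Q
  rapidDecay_eulerDeriv := rapidDecay_schwartzMap (schwartzEulerDeriv Q)

lemma lineDeriv_schwartzEulerDeriv (Q : 𝓢(V, ℝ)) (e : V) :
    ∂_{e} (schwartzEulerDeriv Q) = ∂_{e} Q + schwartzEulerDeriv (∂_{e} Q) := by
  ext x
  have hfderiv : HasFDerivAt (fderiv ℝ Q) (fderiv ℝ (fderiv ℝ Q) x) x :=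
    ((Q.smooth 2).fderiv_right (m := 1) (by norm_num)).differentiable one_ne_zero x |>.hasFDerivAt
  have heuler := hfderiv.clm_apply (hasFDerivAt_id x)
  have hline := hfderiv.clm_apply (hasFDerivAt_const e x)
  have hsymm : IsSymmSndFDerivAt ℝ Q x := (Q.smooth 2).contDiffAt.isSymmSndFDerivAt (by simp)
  have hleft : ∂_{e} (schwartzEulerDeriv Q) x = fderiv ℝ Q x e + fderiv ℝ (fderiv ℝ Q) x e x := by
    rw [SchwartzMap.lineDerivOp_apply_eq_fderiv]
    exact (DFunLike.congr_fun heuler.fderiv e).trans (by simp)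
  have hright : schwartzEulerDeriv (∂_{e} Q) x = fderiv ℝ (fderiv ℝ Q) x x e := by
    exact (DFunLike.congr_fun hline.fderiv x).trans (by simp)
  rw [hleft, add_apply, hright, SchwartzMap.lineDerivOp_apply_eq_fderiv, hsymm.eq]

variable [FiniteDimensional ℝ V] [MeasurableSpace V] [BorelSpace V] {μ : Measure V}
  [μ.IsAddHaarMeasure]

lemma integrable_schwartz_mul (f g : 𝓢(V, ℝ)) : Integrable (fun x => f x * g x) μ :=
  (SchwartzMap.pairing (ContinuousLinearMap.mul ℝ ℝ) f g).integrable

lemma integral_eulerDeriv_mul_self (Q : 𝓢(V, ℝ)) :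
    ∫ x, eulerDeriv Q x * Q x ∂μ = -(finrank ℝ V / 2) * ∫ x, Q x ^ 2 ∂μ := by
  simpa using integral_posHomogeneous_mul_mul_eulerDeriv_self posHomogeneous_one
    (temperedIntegrable_one (μ := μ)) (eulerRegular_schwartzMap Q)

lemma integral_mul_lineDeriv_lineDeriv_self (Q : 𝓢(V, ℝ)) (e : V) :
    ∫ x, Q x * ∂_{e} (∂_{e} Q) x ∂μ = -∫ x, ∂_{e} Q x ^ 2 ∂μ := by
  rw [SchwartzMap.integral_mul_lineDerivOp_right_eq_neg_left]
  simp only [pow_two]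

lemma integral_eulerDeriv_mul_lineDeriv_lineDeriv (Q : 𝓢(V, ℝ)) (e : V) :
    ∫ x, schwartzEulerDeriv Q x * ∂_{e} (∂_{e} Q) x ∂μ =
      (finrank ℝ V - 2) / 2 * ∫ x, ∂_{e} Q x ^ 2 ∂μ := by
  have hsplit (x : V) : ∂_{e} (schwartzEulerDeriv Q) x * ∂_{e} Q x =
      ∂_{e} Q x * ∂_{e} Q x + schwartzEulerDeriv (∂_{e} Q) x * ∂_{e} Q x := by
    rw [lineDeriv_schwartzEulerDeriv, add_apply, add_mul]
  rw [SchwartzMap.integral_mul_lineDerivOp_right_eq_neg_left]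
  simp only [hsplit]
  rw [integral_add (integrable_schwartz_mul _ _) (integrable_schwartz_mul _ _)]
  simp only [schwartzEulerDeriv_apply, integral_eulerDeriv_mul_self, pow_two]
  ring

end Schwartz

section Laplacian

variable {N : ℕ} (Q φ : 𝓢(EuclideanSpace ℝ (Fin N), ℝ))

lemma lapR_eq_sum_lineDeriv (x : EuclideanSpace ℝ (Fin N)) :
    lapR Q x = ∑ i : Fin N,
      ∂_{EuclideanSpace.single i (1 : ℝ)} (∂_{EuclideanSpace.single i (1 : ℝ)} Q) x :=
  rfl

lemma gradSq_eq_sum_lineDeriv_sq (x : EuclideanSpace ℝ (Fin N)) :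
    gradSq Q x = ∑ i : Fin N, ∂_{EuclideanSpace.single i (1 : ℝ)} Q x ^ 2 := by
  simp only [gradSq, SchwartzMap.lineDerivOp_apply_eq_fderiv, Real.norm_eq_abs, sq_abs]

lemma integrable_gradSq_s16 : Integrable (gradSq Q) := by
  rw [funext (gradSq_eq_sum_lineDeriv_sq Q)]
  simp only [pow_two]
  exact integrable_finsetSum _ fun i _ => integrable_schwartz_mul _ _

lemma integral_gradSq :
    ∫ x, gradSq Q x = ∑ i : Fin N, ∫ x, ∂_{EuclideanSpace.single i (1 : ℝ)} Q x ^ 2 := by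
  simp only [gradSq_eq_sum_lineDeriv_sq, pow_two]
  exact integral_finsetSum _ fun i _ => integrable_schwartz_mul _ _

lemma integrable_mul_lapR : Integrable fun x => φ x * lapR Q x := by
  simp only [lapR_eq_sum_lineDeriv, Finset.mul_sum]
  exact integrable_finsetSum _ fun i _ => integrable_schwartz_mul _ _

lemma integral_mul_lapR :
    ∫ x, φ x * lapR Q x = ∑ i : Fin N, ∫ x, φ x *
      ∂_{EuclideanSpace.single i (1 : ℝ)} (∂_{EuclideanSpace.single i (1 : ℝ)} Q) x := by
  simp only [lapR_eq_sum_lineDeriv, Finset.mul_sum]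
  exact integral_finsetSum _ fun i _ => integrable_schwartz_mul _ _

lemma integral_mul_lapR_self : ∫ x, Q x * lapR Q x = -∫ x, gradSq Q x := by
  simp only [integral_mul_lapR, integral_mul_lineDeriv_lineDeriv_self, integral_gradSq,
    Finset.sum_neg_distrib]

lemma integral_eulerDeriv_mul_lapR :
    ∫ x, schwartzEulerDeriv Q x * lapR Q x = ((N : ℝ) - 2) / 2 * ∫ x, gradSq Q x := by
  simp only [integral_mul_lapR, integral_eulerDeriv_mul_lineDeriv_lineDeriv, integral_gradSq,
    finrank_euclideanSpace, Fintype.card_fin, Finset.mul_sum]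

end Laplacian

section Hardy

variable {N : ℕ}

lemma temperedIntegrable_norm_rpow_neg_two (hN : 3 ≤ N) :
    TemperedIntegrable (fun x : EuclideanSpace ℝ (Fin N) => ‖x‖ ^ (-2 : ℝ)) volume := by
  have hN' : (3 : ℝ) ≤ N := by exact_mod_cast hN
  refine temperedIntegrable_norm_rpow ?_
  rw [finrank_euclideanSpace_fin]
  linarith

lemma integrable_hardy_mul (hN : 3 ≤ N) (φ Q : 𝓢(EuclideanSpace ℝ (Fin N), ℝ)) :
    Integrable fun x => ‖x‖ ^ (-2 : ℝ) * (φ x * Q x) :=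
  (temperedIntegrable_norm_rpow_neg_two hN).integrable_mul
    (φ.continuous.mul Q.continuous).aestronglyMeasurable
    ((rapidDecay_schwartzMap φ).mul (rapidDecay_schwartzMap Q))

lemma integral_hardy_mul_eulerDeriv_self (hN : 3 ≤ N) (Q : 𝓢(EuclideanSpace ℝ (Fin N), ℝ)) :
    ∫ x, ‖x‖ ^ (-2 : ℝ) * (eulerDeriv Q x * Q x) =
      -(((N : ℝ) - 2) / 2) * ∫ x, ‖x‖ ^ (-2 : ℝ) * Q x ^ 2 := by
  have h := integral_posHomogeneous_mul_mul_eulerDeriv_self (posHomogeneous_norm_rpow (-2))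
    (temperedIntegrable_norm_rpow_neg_two hN) (eulerRegular_schwartzMap Q)
  rwa [finrank_euclideanSpace_fin] at h

lemma integral_gradSq_add_hardy (hN : 3 ≤ N) (b : ℝ) (Q : 𝓢(EuclideanSpace ℝ (Fin N), ℝ)) :
    ∫ x, (gradSq Q x + b * Q x ^ 2 / ‖x‖ ^ 2) =
      (∫ x, gradSq Q x) + b * ∫ x, ‖x‖ ^ (-2 : ℝ) * Q x ^ 2 := by
  have hpot (x : EuclideanSpace ℝ (Fin N)) :
      b * Q x ^ 2 / ‖x‖ ^ 2 = b * (‖x‖ ^ (-2 : ℝ) * (Q x * Q x)) := by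
    rw [Real.rpow_neg (norm_nonneg x), Real.rpow_two]
    ring
  simp only [hpot]
  rw [integral_add (integrable_gradSq_s16 Q) ((integrable_hardy_mul hN Q Q).const_mul b),
    integral_const_mul]
  simp only [pow_two]

lemma integral_weak_formulation (hN : 3 ≤ N) {b : ℝ} {Q : 𝓢(EuclideanSpace ℝ (Fin N), ℝ)}
    {g : EuclideanSpace ℝ (Fin N) → ℝ}
    (hQ : ∀ x, x ≠ 0 → -lapR Q x + b * Q x / ‖x‖ ^ 2 + Q x = g x)
    (φ : 𝓢(EuclideanSpace ℝ (Fin N), ℝ)) :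
    ∫ x, g x * φ x = -(∫ x, φ x * lapR Q x) + b * (∫ x, ‖x‖ ^ (-2 : ℝ) * (φ x * Q x)) +
      ∫ x, φ x * Q x := by
  have : Nonempty (Fin N) := ⟨⟨0, by omega⟩⟩
  have hae : (fun x => g x * φ x) =ᵐ[volume] fun x =>
      -(φ x * lapR Q x) + b * (‖x‖ ^ (-2 : ℝ) * (φ x * Q x)) + φ x * Q x := by
    filter_upwards [Measure.ae_ne volume 0] with x hx
    rw [← hQ x hx, Real.rpow_neg (norm_nonneg x), Real.rpow_two]
    ring
  have hlap := (integrable_mul_lapR Q φ).fun_neg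
  have hpot := (integrable_hardy_mul hN φ Q).const_mul b
  rw [integral_congr_ae hae, integral_add (hlap.fun_add hpot) (integrable_schwartz_mul φ Q),
    integral_add hlap hpot, integral_neg, integral_const_mul]

end Hardy

section Choquard

variable {N : ℕ} {α p b : ℝ} {Q : 𝓢(EuclideanSpace ℝ (Fin N), ℝ)}

/-- `Q` solves the Choquard equation `𝓛_b Q + Q = (I_α ∗ |Q|^p)|Q|^{p-2}Q`, classically and away
from the singularity of the potential. -/
def IsChoquardSolution (α p b : ℝ) (Q : 𝓢(EuclideanSpace ℝ (Fin N), ℝ)) : Prop :=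
  ∀ x : EuclideanSpace ℝ (Fin N), x ≠ 0 →
    -lapR (⇑Q) x + b * Q x / ‖x‖ ^ 2 + Q x =
      rieszConvR N α p (⇑Q) x * |Q x| ^ (p - 2) * Q x

lemma temperedIntegrable_riesz (hα : 0 < α) :
    TemperedIntegrable
      (fun z : EuclideanSpace ℝ (Fin N) => rieszConst N α * ‖z‖ ^ (α - N)) volume := by
  refine (temperedIntegrable_norm_rpow ?_).const_mul _
  rw [finrank_euclideanSpace_fin]
  linarith

lemma integral_rieszConvR_mul_eulerDeriv (hα : 0 < α) (hp : 1 < p)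
    (Q : 𝓢(EuclideanSpace ℝ (Fin N), ℝ)) :
    ∫ x, rieszConvR N α p Q x * eulerDeriv (fun y => |Q y| ^ p) x =
      -((N + α) / 2) * ∫ x, rieszConvR N α p Q x * |Q x| ^ p := by
  have h := integral_convolution_mul_eulerDeriv
    ((posHomogeneous_norm_rpow (α - N)).const_mul (rieszConst N α)) (temperedIntegrable_riesz hα)
    (fun z => by rw [norm_neg]) ((eulerRegular_schwartzMap Q).abs_rpow hp)
  rw [finrank_euclideanSpace_fin] at h
  simp only [rieszConvR]
  rw [h]
  ring

theorem nehari_identity (hN : 3 ≤ N) (hp : p ≠ 0) (hQ : IsChoquardSolution α p b Q) :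
    (∫ x, (gradSq Q x + b * Q x ^ 2 / ‖x‖ ^ 2)) + ∫ x, Q x ^ 2 =
      ∫ x, rieszConvR N α p Q x * |Q x| ^ p := by
  have hweak := integral_weak_formulation hN hQ Q
  have hrhs (x : EuclideanSpace ℝ (Fin N)) :
      rieszConvR N α p Q x * |Q x| ^ (p - 2) * Q x * Q x = rieszConvR N α p Q x * |Q x| ^ p := by
    rw [← abs_rpow_sub_two_mul_mul_self hp (Q x)]
    ring
  simp only [hrhs, ← pow_two] at hweak
  rw [integral_mul_lapR_self, neg_neg, ← integral_gradSq_add_hardy hN] at hweak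
  exact hweak.symm

theorem pohozaev_identity (hN : 3 ≤ N) (hα : 0 < α) (hp : 1 < p)
    (hQ : IsChoquardSolution α p b Q) :
    (N - 2) / 2 * (∫ x, (gradSq Q x + b * Q x ^ 2 / ‖x‖ ^ 2)) + N / 2 * ∫ x, Q x ^ 2 =
      (N + α) / (2 * p) * ∫ x, rieszConvR N α p Q x * |Q x| ^ p := by
  have hweak := integral_weak_formulation hN hQ (schwartzEulerDeriv Q)
  have hrhs (x : EuclideanSpace ℝ (Fin N)) :
      rieszConvR N α p Q x * |Q x| ^ (p - 2) * Q x * eulerDeriv Q x =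
        p⁻¹ * (rieszConvR N α p Q x * eulerDeriv (fun y => |Q y| ^ p) x) := by
    rw [eulerDeriv_abs_rpow hp Q.differentiableAt]
    field_simp
  rw [integral_eulerDeriv_mul_lapR] at hweak
  simp only [schwartzEulerDeriv_apply, hrhs] at hweak
  rw [integral_const_mul, integral_rieszConvR_mul_eulerDeriv hα hp,
    integral_hardy_mul_eulerDeriv_self hN, integral_eulerDeriv_mul_self,
    finrank_euclideanSpace_fin] at hweak
  rw [integral_gradSq_add_hardy hN]
  have hcoeff : (N + α) / (2 * p) = p⁻¹ * ((N + α) / 2) := by field_simp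
  rw [hcoeff]
  linarith

theorem nehari_pohozaev_identities_general (hN : 3 ≤ N) (hα : 0 < α) (hp : 1 < p)
    (hdet : (N : ℝ) + α - (N - 2) * p ≠ 0) (hQ : IsChoquardSolution α p b Q) :
    (∫ x, rieszConvR N α p Q x * |Q x| ^ p) =
        2 * p / (N + α - (N - 2) * p) * ∫ x, Q x ^ 2 ∧
      (∫ x, (gradSq Q x + b * Q x ^ 2 / ‖x‖ ^ 2)) =
        (N * p - N - α) / (N + α - (N - 2) * p) * ∫ x, Q x ^ 2 := by
  have hnehari := nehari_identity hN (by linarith) hQ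
  have hpohozaev := pohozaev_identity hN hα hp hQ
  have hpohozaev' : p * ((N - 2) * (∫ x, (gradSq Q x + b * Q x ^ 2 / ‖x‖ ^ 2)) +
      N * ∫ x, Q x ^ 2) = (N + α) * ∫ x, rieszConvR N α p Q x * |Q x| ^ p := by
    field_simp at hpohozaev
    linarith
  rw [div_mul_eq_mul_div, div_mul_eq_mul_div, eq_div_iff hdet, eq_div_iff hdet]
  constructor
  · linear_combination (N - 2) * p * hnehari - hpohozaev'
  · linear_combination (N + α) * hnehari - hpohozaev'

end Choquard

/-- Nehari and Pohozaev identities for Schwartz solutions of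
`𝓛_b Q + Q = (I_α∗|Q|^p)|Q|^{p−2}Q`. -/
theorem nehari_pohozaev_identities (N : ℕ) (hN : 3 ≤ N) (α p b : ℝ)
    (hα0 : 0 < α) (hαN : α < N)
    (hp1 : ((N : ℝ) + α) / N < p) (hp2 : p < ((N : ℝ) + α) / ((N : ℝ) - 2))
    (hb : -(((N : ℝ) - 2) ^ 2 / 4) < b)
    (Q : SchwartzMap (EuclideanSpace ℝ (Fin N)) ℝ)
    (hQ : ∀ x : EuclideanSpace ℝ (Fin N), x ≠ 0 →
      -lapR (⇑Q) x + b * Q x / ‖x‖ ^ 2 + Q x =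
        rieszConvR N α p (⇑Q) x * |Q x| ^ (p - 2) * Q x) :
    (∫ x, rieszConvR N α p (⇑Q) x * |Q x| ^ p) =
        2 * p / ((N : ℝ) + α - ((N : ℝ) - 2) * p) * ∫ x, (Q x) ^ 2 ∧
      (∫ x, (gradSq (⇑Q) x + b * (Q x) ^ 2 / ‖x‖ ^ 2)) =
        ((N : ℝ) * p - N - α) / ((N : ℝ) + α - ((N : ℝ) - 2) * p) * ∫ x, (Q x) ^ 2 :=
  have hN' : (3 : ℝ) ≤ N := by exact_mod_cast hN
  nehari_pohozaev_identities_general hN hα0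
    (by rw [div_lt_iff₀ (by linarith)] at hp1; nlinarith)
    (by rw [lt_div_iff₀ (by linarith)] at hp2; linarith) hQ
end
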